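/- arXiv:2309.04897 — 2 statements merged into one kernel-verified Lean document; each statement's English description precedes it below -/
import Mathlib

section
/- (Explicit formula for the fused R-matrix.) Let I ≥ 1 be an integer, 0 < q < 1, and let u ∈ ℂ \ {0} satisfy u·q^m ≠ 1 for every integer m with −I ≤ m ≤ I. Then for all integers 0 ≤ a, b, c, d ≤ I: R^I(u)_{a,b}^{c,d} = 𝟙_{a+b=c+d} · u^{d−b} q^{(d−a)I} · Σ_{p=0}^{min(b,c)} Φ_{q⁻¹}(c−p, c+d−p; u, q^I u) · Φ_{q⁻¹}(p, b; q^I/u, q^I). -/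
open scoped Matrix ComplexOrder

noncomputable section

/-- Entries `R(u)_{a,b}^{c,d}` of the unfused stochastic six-vertex `R`-matrix. -/
def Rent (q u : ℂ) (a b c d : Fin 2) : ℂ :=
  if a = 0 ∧ b = 0 ∧ c = 0 ∧ d = 0 then 1
  else if a = 1 ∧ b = 1 ∧ c = 1 ∧ d = 1 then 1
  else if a = 0 ∧ b = 1 ∧ c = 0 ∧ d = 1 then q * (1 - u) / (1 - q * u)
  else if a = 0 ∧ b = 1 ∧ c = 1 ∧ d = 0 then (1 - q) / (1 - q * u)
  else if a = 1 ∧ b = 0 ∧ c = 0 ∧ d = 1 then u * (1 - q) / (1 - q * u)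
  else if a = 1 ∧ b = 0 ∧ c = 1 ∧ d = 0 then (1 - u) / (1 - q * u)
  else 0

/-- The unfused `R`-matrix as an operator (matrix) on `ℂ² ⊗ ℂ²`;
row index `(c,d)` (output), column index `(a,b)` (input), so that
`R(u)(e_a ⊗ e_b) = Σ_{c,d} R(u)_{a,b}^{c,d} e_c ⊗ e_d`. -/
def Rmat (q u : ℂ) : Matrix (Fin 2 × Fin 2) (Fin 2 × Fin 2) ℂ :=
  fun cd ab => Rent q u ab.1 ab.2 cd.1 cd.2

/-- Entries `K(u)_a^d` of the unfused boundary `K`-matrix, parameters `fa = 𝔞`, `fc = 𝔠`. -/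
def Kent (fa fc u : ℂ) (a d : Fin 2) : ℂ :=
  if a = 0 ∧ d = 0 then ((fc - fa) * u ^ 2 + u) / (fc * u ^ 2 + u - fa)
  else if a = 0 ∧ d = 1 then fa * (u ^ 2 - 1) / (fc * u ^ 2 + u - fa)
  else if a = 1 ∧ d = 0 then fc * (u ^ 2 - 1) / (fc * u ^ 2 + u - fa)
  else (fc - fa + u) / (fc * u ^ 2 + u - fa)

/-- The unfused `K`-matrix as an operator on `ℂ²`: row `d` (output), column `a` (input). -/
def Kmat (fa fc u : ℂ) : Matrix (Fin 2) (Fin 2) ℂ := fun d a => Kent fa fc u a d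

/-- Entries `K̄(u)_b^c` of the unfused boundary `K̄`-matrix, parameters `fb = 𝔟`, `fd = 𝔡`. -/
def Kbent (fb fd u : ℂ) (b c : Fin 2) : ℂ :=
  if b = 0 ∧ c = 0 then ((fb - fd) * u ^ 2 - u) / (fb * u ^ 2 - u - fd)
  else if b = 0 ∧ c = 1 then fd * (u ^ 2 - 1) / (fb * u ^ 2 - u - fd)
  else if b = 1 ∧ c = 0 then fb * (u ^ 2 - 1) / (fb * u ^ 2 - u - fd)
  else (fb - fd - u) / (fb * u ^ 2 - u - fd)

/-- The operator `P` on `ℂ² ⊗ ℂ²` swapping the two tensor factors. -/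
def swapMat : Matrix (Fin 2 × Fin 2) (Fin 2 × Fin 2) ℂ :=
  fun p r => if p.1 = r.2 ∧ p.2 = r.1 then 1 else 0

/-- `Ř(u) = P ∘ R(u)`. -/
def RcheckMat (q u : ℂ) : Matrix (Fin 2 × Fin 2) (Fin 2 × Fin 2) ℂ := swapMat * Rmat q u

/-- A two-site operator `T` placed at sites `i, j` of an `n`-fold tensor power of `ℂ²`,
acting as the identity on the other factors.  Here `(ℂ²)^{⊗n}` is identified with the
function space `(Fin n → Fin 2) → ℂ` with its standard basis. -/
def emb2 {n : ℕ} (i j : Fin n) (T : Matrix (Fin 2 × Fin 2) (Fin 2 × Fin 2) ℂ) :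
    Matrix (Fin n → Fin 2) (Fin n → Fin 2) ℂ :=
  fun x y => T (x i, x j) (y i, y j) * (if ∀ k, k ≠ i → k ≠ j → x k = y k then 1 else 0)

/-- A one-site operator `T` placed at site `i` of an `n`-fold tensor power of `ℂ²`. -/
def emb1 {n : ℕ} (i : Fin n) (T : Matrix (Fin 2) (Fin 2) ℂ) :
    Matrix (Fin n → Fin 2) (Fin n → Fin 2) ℂ :=
  fun x y => T (x i) (y i) * (if ∀ k, k ≠ i → x k = y k then 1 else 0)

/-- The permutation operator `P_ω` on `(ℂ²)^{⊗n}`: it puts the `k`-th factor in position `ω(k)`. -/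
def permMat (n : ℕ) (ω : Equiv.Perm (Fin n)) :
    Matrix (Fin n → Fin 2) (Fin n → Fin 2) ℂ :=
  fun x y => if (fun k => x (ω k)) = y then 1 else 0

/-- `inv(a)` : the number of inversions of a `{0,1}`-word. -/
def invCount {I : ℕ} (x : Fin I → Fin 2) : ℕ :=
  (Finset.univ.filter (fun p : Fin I × Fin I => p.1 < p.2 ∧ x p.2 < x p.1)).card

/-- `Z_q(I;m)`. -/
def Zq (I : ℕ) (q : ℂ) (m : ℕ) : ℂ :=
  ∑ x ∈ Finset.univ.filter (fun x : Fin I → Fin 2 => (∑ j, ((x j : ℕ))) = m),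
    q ^ invCount x

/-- The projection `Π : (ℂ²)^{⊗I} → ℂ^{I+1}`, `e_{a₁…a_I} ↦ e_{Σ a_j}`. -/
def PiMat (I : ℕ) : Matrix (Fin (I + 1)) (Fin I → Fin 2) ℂ :=
  fun m x => if (∑ j, ((x j : ℕ))) = (m : ℕ) then 1 else 0

/-- The injection `Π̂ : ℂ^{I+1} → (ℂ²)^{⊗I}`. -/
def hatPiMat (I : ℕ) (q : ℂ) : Matrix (Fin I → Fin 2) (Fin (I + 1)) ℂ :=
  fun x m => if (∑ j, ((x j : ℕ))) = (m : ℕ) then q ^ invCount x / Zq I q (m : ℕ) else 0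

/-- `F = Π̂ ∘ Π`, the projector onto the `q`-exchangeable subspace. -/
def Fmat (I : ℕ) (q : ℂ) : Matrix (Fin I → Fin 2) (Fin I → Fin 2) ℂ :=
  hatPiMat I q * PiMat I

/-- Restriction of a configuration on `2I` sites to the first `I` sites. -/
def firstHalf {I : ℕ} (x : Fin (2 * I) → Fin 2) : Fin I → Fin 2 :=
  fun k => x ⟨k.1, by have := k.isLt; omega⟩

/-- Restriction of a configuration on `2I` sites to the last `I` sites. -/
def secondHalf {I : ℕ} (x : Fin (2 * I) → Fin 2) : Fin I → Fin 2 :=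
  fun k => x ⟨k.1 + I, by have := k.isLt; omega⟩

/-- `F ⊗ F` acting on `(ℂ²)^{⊗2I}`. -/
def FFmat (I : ℕ) (q : ℂ) : Matrix (Fin (2 * I) → Fin 2) (Fin (2 * I) → Fin 2) ℂ :=
  fun x y => Fmat I q (firstHalf x) (firstHalf y) * Fmat I q (secondHalf x) (secondHalf y)

/-- `Π ⊗ Π : (ℂ²)^{⊗2I} → ℂ^{I+1} ⊗ ℂ^{I+1}`. -/
def PiPiMat (I : ℕ) : Matrix (Fin (I + 1) × Fin (I + 1)) (Fin (2 * I) → Fin 2) ℂ :=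
  fun p x => PiMat I p.1 (firstHalf x) * PiMat I p.2 (secondHalf x)

/-- `Π̂ ⊗ Π̂ : ℂ^{I+1} ⊗ ℂ^{I+1} → (ℂ²)^{⊗2I}`. -/
def hatPiPiMat (I : ℕ) (q : ℂ) : Matrix (Fin (2 * I) → Fin 2) (Fin (I + 1) × Fin (I + 1)) ℂ :=
  fun x p => hatPiMat I q (firstHalf x) p.1 * hatPiMat I q (secondHalf x) p.2

/-- The fused bulk operator `R̊^I(u)` on `(ℂ²)^{⊗2I}` : the ordered product (composition,
factors written from left to right) over `a = I, I-1, …, 1` and, inside, `b = 1, 2, …, I`,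
of the operators `R(u q^{b-a})_{b, a+I}` (sites are 1-based; here `a = I - a'`, `b = b' + 1`). -/
def Rring (I : ℕ) (q u : ℂ) : Matrix (Fin (2 * I) → Fin 2) (Fin (2 * I) → Fin 2) ℂ :=
  ((List.finRange I).map (fun a' =>
    ((List.finRange I).map (fun b' =>
      emb2 (⟨b'.1, by have := b'.isLt; omega⟩ : Fin (2 * I))
        ⟨2 * I - 1 - a'.1, by have := a'.isLt; omega⟩
        (Rmat q (u * q ^ (((b'.1 : ℤ) + 1) - ((I : ℤ) - (a'.1 : ℤ))))))).prod)).prod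

/-- The fused `R`-matrix `R^I(u) = (Π⊗Π) ∘ R̊^I(u) ∘ (Π̂⊗Π̂)` on `ℂ^{I+1} ⊗ ℂ^{I+1}`;
its entry at row `(c,d)`, column `(a,b)` is `R^I(u)_{a,b}^{c,d}`. -/
def RI (I : ℕ) (q u : ℂ) :
    Matrix (Fin (I + 1) × Fin (I + 1)) (Fin (I + 1) × Fin (I + 1)) ℂ :=
  PiPiMat I * Rring I q u * hatPiPiMat I q

/-- Real powers of a positive real number, viewed in `ℂ`. -/
def qrpow (q : ℝ) (r : ℝ) : ℂ := ((q ^ r : ℝ) : ℂ)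

/-- The fused boundary operator `K̊^I(u)` on `(ℂ²)^{⊗I}` : `P_rev` composed with the ordered
product over `a = I, …, 1` of `K(u q^{(I+1)/2-a})_a` composed with the ordered product over
`b = a-1, …, 1` of `R(u² q^{I+1-a-b})_{b,a}` (sites 1-based; `a = I - a'`, `b = a - 1 - b'`). -/
def Kring (I : ℕ) (q : ℝ) (fa fc : ℂ) (u : ℂ) :
    Matrix (Fin I → Fin 2) (Fin I → Fin 2) ℂ :=
  permMat I (Fin.revPerm) *
  ((List.finRange I).map (fun a' =>
    emb1 (⟨I - 1 - a'.1, by have := a'.isLt; omega⟩ : Fin I)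
        (Kmat fa fc (u * qrpow q (((I : ℝ) + 1) / 2 - ((I : ℝ) - (a'.1 : ℝ))))) *
    ((List.finRange (I - 1 - a'.1)).map (fun b' =>
      emb2 (⟨I - a'.1 - 2 - b'.1, by have := a'.isLt; have := b'.isLt; omega⟩ : Fin I)
        ⟨I - 1 - a'.1, by have := a'.isLt; omega⟩
        (Rmat (q : ℂ)
          (u ^ 2 * (q : ℂ) ^ (((I : ℤ) + 1) - ((I : ℤ) - (a'.1 : ℤ)) -
            ((I : ℤ) - (a'.1 : ℤ) - 1 - (b'.1 : ℤ))))))).prod)).prod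

/-- The fused `K`-matrix `K^I(u) = Π ∘ K̊^I(u) ∘ Π̂` on `ℂ^{I+1}`;
its entry at row `d`, column `a` is `K^I(u)_a^d`. -/
def KI (I : ℕ) (q : ℝ) (fa fc u : ℂ) : Matrix (Fin (I + 1)) (Fin (I + 1)) ℂ :=
  PiMat I * Kring I q fa fc u * hatPiMat I (q : ℂ)

/-- `M₀(u) = u·1 + 𝐞`, `M₁(u) = u⁻¹·1 + 𝐝` in a ℂ-algebra `A`. -/
def Mop {A : Type*} [Ring A] [Algebra ℂ A] (dd ee : A) (i : Fin 2) (u : ℂ) : A :=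
  if i = 0 then algebraMap ℂ A u + ee else algebraMap ℂ A u⁻¹ + dd

/-- The fused elements `M^I_ζ(u)`. -/
def MIop {A : Type*} [Ring A] [Algebra ℂ A] (dd ee : A) (I : ℕ) (q : ℝ) (ζ : ℕ) (u : ℂ) : A :=
  ∑ z ∈ Finset.univ.filter (fun z : Fin I → Fin 2 => (∑ j, ((z j : ℕ))) = ζ),
    ((List.finRange I).map (fun a =>
      Mop dd ee (z a) (u * qrpow q (((a.1 : ℝ) + 1) - ((I : ℝ) + 1) / 2)))).prod

end

/-- The `q`-Pochhammer symbol `(z;s)_n = (1−z)(1−sz)⋯(1−s^{n−1}z)`. -/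
noncomputable def poch (z s : ℂ) (n : ℕ) : ℂ := ∏ k ∈ Finset.range n, (1 - s ^ k * z)

/-- `Φ_s(i,j;x,y)` (used with `s = q⁻¹`). -/
noncomputable def Phi (s : ℂ) (i j : ℕ) (x y : ℂ) : ℂ :=
  (y / x) ^ i * (poch x s i * poch (y / x) s (j - i) / poch y s j) *
    (poch s s j / (poch s s i * poch s s (j - i)))


/-! ### Part 1: the closed form and its recursions -/

section closedForm

lemma poch_zero (z s : ℂ) : poch z s 0 = 1 := by simp [poch]

lemma poch_succ (z s : ℂ) (n : ℕ) : poch z s (n + 1) = poch z s n * (1 - s ^ n * z) := by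
  simp [poch, Finset.prod_range_succ]

lemma poch_succ_left (z s : ℂ) (n : ℕ) : poch z s (n + 1) = (1 - z) * poch (s * z) s n := by
  simp only [poch, Finset.prod_range_succ']
  rw [mul_comm]
  congr 1
  · simp
  · refine Finset.prod_congr rfl fun k _ => ?_
    ring

lemma poch_shift (z s : ℂ) (n : ℕ) :
    (1 - z) * poch (s * z) s n = poch z s n * (1 - s ^ n * z) := by
  rw [← poch_succ_left, poch_succ]

lemma poch_ss_ne (s : ℂ) (hs : ∀ n : ℕ, n ≠ 0 → s ^ n ≠ 1) (n : ℕ) : poch s s n ≠ 0 := by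
  unfold poch
  refine Finset.prod_ne_zero_iff.2 fun k _ => ?_
  rw [← pow_succ]; exact sub_ne_zero.2 (hs _ (by omega)).symm

/-- `(u;s)_{b-p}/(s;s)_{b-p}`, zero for `p > b`. -/
noncomputable def gfac (s u : ℂ) (b : ℤ) (p : ℕ) : ℂ :=
  if (p : ℤ) ≤ b then poch u s (b - p).toNat / poch s s (b - p).toNat else 0

lemma gfac_shift (s u : ℂ) (b : ℤ) (p : ℕ) :
    gfac s (s * u) b p * (1 - u) = gfac s u b p * (1 - s ^ (b - p) * u) := by
  unfold gfac
  split_ifs with h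
  · obtain ⟨n, hn⟩ := Int.eq_ofNat_of_zero_le (sub_nonneg.2 h)
    rw [hn]
    simp only [Int.toNat_natCast, zpow_natCast]
    have := poch_shift u s n
    rw [div_mul_eq_mul_div, mul_comm, this]; ring
  · simp

lemma gfac_shift' (s u : ℂ) (hs : ∀ n : ℕ, n ≠ 0 → s ^ n ≠ 1) (b : ℤ) (p : ℕ) :
    gfac s (s * u) (b - 1) p * (1 - u) = gfac s u b p * (1 - s ^ (b - p)) := by
  unfold gfac
  by_cases h : (p : ℤ) ≤ b
  · obtain ⟨n, hn⟩ := Int.eq_ofNat_of_zero_le (sub_nonneg.2 h)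
    rw [if_pos h, hn]
    rcases n with _ | n
    · rw [if_neg (by omega)]; simp
    · rw [if_pos (by push_cast at hn; omega), show b - 1 - p = (n : ℤ) by push_cast at hn; omega]
      simp only [Int.toNat_natCast, zpow_natCast]
      rw [poch_succ_left u, poch_succ s]
      have h1 : 1 - s ^ n * s ≠ 0 := by
        rw [← pow_succ]; exact sub_ne_zero.2 (hs _ (by omega)).symm
      rw [pow_succ]
      have h2 := poch_ss_ne s hs n
      generalize poch s s n = A at *
      generalize s ^ n * s = B at *
      field_simp
  · rw [if_neg h, if_neg (by omega)]; simp

/-- Triangular numbers. -/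
def tri (b : ℤ) : ℤ := b * (b + 1) / 2

lemma tri_sub (b : ℤ) : tri b = tri (b - 1) + b := by
  unfold tri
  have : b * (b + 1) = (b - 1) * (b - 1 + 1) + b * 2 := by ring
  rw [this, Int.add_mul_ediv_right _ _ (by norm_num)]

/-- Summand of the closed form. -/
noncomputable def tterm (q : ℂ) (I J : ℕ) (u : ℂ) (b : ℤ) (c d p : ℕ) : ℂ :=
  u ^ p * q ^ ((J : ℤ) * ((c : ℤ) - p)) * poch (q ^ ((I : ℤ) - J) * u) q⁻¹ (c - p) *
    poch (q ^ J / u) q⁻¹ p * gfac q⁻¹ u b p * poch q⁻¹ q⁻¹ (c + d - p) /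
    (poch (q ^ I * u) q⁻¹ (c + d - p) * poch q⁻¹ q⁻¹ (c - p) * poch q⁻¹ q⁻¹ p)

noncomputable def pref (q : ℂ) (I J : ℕ) (u : ℂ) (b : ℤ) (c d : ℕ) : ℂ :=
  (-u) ^ ((d : ℤ) - b) *
    q ^ ((d : ℤ) * I - ((c : ℤ) + d - b) * J + tri d - tri b)

noncomputable def Vc (q : ℂ) (I J : ℕ) (u : ℂ) (b : ℤ) (c d : ℕ) : ℂ :=
  ∑ p ∈ Finset.range (c + 1), pref q I J u b c d * tterm q I J u b c d p

variable {q : ℂ}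

/-- normalized one-row weights -/
noncomputable def L00 (q : ℂ) (I : ℕ) (u : ℂ) (a : ℤ) : ℂ :=
  (1 - q ^ ((I : ℤ) - a) * u) / (1 - q ^ I * u)
noncomputable def L01 (q : ℂ) (I : ℕ) (u : ℂ) (a : ℤ) : ℂ :=
  u * (q ^ ((I : ℤ) - a) - q ^ I) / (1 - q ^ I * u)
noncomputable def L11 (q : ℂ) (I : ℕ) (u : ℂ) (a : ℤ) : ℂ :=
  (q ^ ((I : ℤ) - a) - q ^ I * u) / (1 - q ^ I * u)
noncomputable def L10 (q : ℂ) (I : ℕ) (u : ℂ) (a : ℤ) : ℂ :=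
  (1 - q ^ ((I : ℤ) - a)) / (1 - q ^ I * u)

lemma hqn_inv (hqn : ∀ n : ℕ, n ≠ 0 → q ^ n ≠ 1) (n : ℕ) (hn : n ≠ 0) : q⁻¹ ^ n ≠ 1 := by
  rw [inv_pow]; intro h; exact hqn n hn (inv_eq_one.1 h)

/-- common part of terms -/
noncomputable def kterm (q : ℂ) (I J : ℕ) (u : ℂ) (c p : ℕ) : ℂ :=
  u ^ p * q ^ ((J : ℤ) * ((c : ℤ) - p)) * poch (q ^ ((I : ℤ) - J) * u) q⁻¹ (c - p) *
    poch (q ^ J / u) q⁻¹ p / (poch q⁻¹ q⁻¹ (c - p) * poch q⁻¹ q⁻¹ p)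

lemma tterm_eq (I J : ℕ) (u : ℂ) (b : ℤ) (c d p : ℕ) :
    tterm q I J u b c d p = kterm q I J u c p * gfac q⁻¹ u b p *
      (poch q⁻¹ q⁻¹ (c + d - p) / poch (q ^ I * u) q⁻¹ (c + d - p)) := by
  unfold tterm kterm
  simp only [div_eq_mul_inv, mul_inv]
  ring

lemma kterm_shift (hq : q ≠ 0) (I J : ℕ) (u : ℂ) (hu : u ≠ 0) (c p : ℕ) (hp : p ≤ c) :
    kterm q I J (q⁻¹ * u) c p = q ^ (-(c : ℤ)) * kterm q I (J + 1) u c p := by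
  unfold kterm
  have h1 : q ^ ((I : ℤ) - J) * (q⁻¹ * u) = q ^ ((I : ℤ) - ((J + 1 : ℕ) : ℤ)) * u := by
    rw [← mul_assoc, ← zpow_sub_one₀ hq]; congr 2; push_cast; ring
  have h2 : q ^ J / (q⁻¹ * u) = q ^ (J + 1) / u := by
    field_simp
    ring
  have h3 : (q⁻¹ * u) ^ p * q ^ ((J : ℤ) * ((c : ℤ) - p)) =
      q ^ (-(c : ℤ)) * (u ^ p * q ^ (((J + 1 : ℕ) : ℤ) * ((c : ℤ) - p))) := by
    rw [mul_pow, inv_pow, ← zpow_natCast q p, ← zpow_neg]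
    rw [mul_right_comm, ← zpow_add₀ hq, mul_left_comm, ← zpow_add₀ hq, mul_comm]
    congr 2; push_cast; ring
  rw [h1, h2, h3]; ring

lemma pref_shift0 (hq : q ≠ 0) (I J : ℕ) (u : ℂ) (hu : u ≠ 0) (b : ℤ) (c d : ℕ) :
    pref q I J (q⁻¹ * u) b c d = q ^ (c : ℤ) * pref q I (J + 1) u b c d := by
  unfold pref
  rw [show -(q⁻¹ * u) = q⁻¹ * (-u) by ring, mul_zpow, inv_zpow', mul_right_comm, ← zpow_add₀ hq,
    mul_left_comm, ← zpow_add₀ hq, mul_comm]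
  congr 2; push_cast; ring

lemma pref_shift0' (hq : q ≠ 0) (I J : ℕ) (u : ℂ) (hu : u ≠ 0) (b : ℤ) (c d : ℕ) :
    q ^ ((J : ℤ) + 1 - b) * pref q I J (q⁻¹ * u) (b - 1) c d
      = q ^ (c : ℤ) * (-u) * pref q I (J + 1) u b c d := by
  unfold pref
  rw [show -(q⁻¹ * u) = q⁻¹ * (-u) by ring, mul_zpow, inv_zpow', tri_sub b]
  rw [show (d : ℤ) - (b - 1) = ((d : ℤ) - b) + 1 by ring, zpow_add_one₀ (neg_ne_zero.2 hu)]
  have e : q ^ ((J : ℤ) + 1 - b) * (q ^ (-((d : ℤ) - b + 1)) * 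
      q ^ ((d : ℤ) * I - ((c : ℤ) + d - (b - 1)) * J + tri d - tri (b - 1))) =
      q ^ (c : ℤ) * q ^ ((d : ℤ) * I - ((c : ℤ) + d - b) * ((J + 1 : ℕ) : ℤ) + tri d -
        (tri (b - 1) + b)) := by
    simp only [← zpow_add₀ hq]; congr 1; push_cast; ring
  linear_combination ((-u) ^ ((d : ℤ) - b) * (-u)) * e

lemma pref_shift1 (hq : q ≠ 0) (I J : ℕ) (u : ℂ) (hu : u ≠ 0) (b : ℤ) (c d : ℕ) :
    pref q I J (q⁻¹ * u) b c d * (-u) * q ^ (I : ℤ) =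
      q ^ (c : ℤ) * q ^ ((J : ℤ) - d) * pref q I (J + 1) u b c (d + 1) := by
  unfold pref
  rw [show -(q⁻¹ * u) = q⁻¹ * (-u) by ring, mul_zpow, inv_zpow']
  rw [show ((d + 1 : ℕ) : ℤ) - b = ((d : ℤ) - b) + 1 by push_cast; ring,
    zpow_add_one₀ (neg_ne_zero.2 hu), tri_sub ((d + 1 : ℕ) : ℤ),
    show ((d + 1 : ℕ) : ℤ) - 1 = d by push_cast; ring]
  have e : q ^ (-((d : ℤ) - b)) * 
      q ^ ((d : ℤ) * I - ((c : ℤ) + d - b) * J + tri d - tri b) *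
      q ^ (I : ℤ) =
      q ^ (c : ℤ) * (q ^ ((J : ℤ) - d) * q ^ (((d + 1 : ℕ) : ℤ) * I - 
        ((c : ℤ) + ((d + 1 : ℕ) : ℤ) - b) * ((J + 1 : ℕ) : ℤ) + 
        (tri d + ((d + 1 : ℕ) : ℤ)) - tri b)) := by
    simp only [← zpow_add₀ hq]; congr 1; push_cast; ring
  linear_combination ((-u) ^ ((d : ℤ) - b) * (-u)) * e

lemma key0 {X Y D u : ℂ} (hu1 : 1 - u ≠ 0) (hD : D ≠ 0) (hr : 1 - X * Y * u ≠ 0) :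
    (1 - X * u) / D * ((1 - Y * u) / (1 - u)) * (D / (1 - X * Y * u))
     - u * ((1 - X) / D) * ((1 - Y) / (1 - u)) * (D / (1 - X * Y * u)) = 1 := by
  have : (1 - X * u) * (1 - Y * u) - u * (1 - X) * (1 - Y) = (1 - u) * (1 - X * Y * u) := by ring
  generalize 1 - X * Y * u = A at *
  generalize 1 - u = B at *
  field_simp
  linear_combination this

lemma key1 {X Y W F u : ℂ} (hu1 : 1 - u ≠ 0) (hD : 1 - F * u ≠ 0) (hr : F * W = X * Y) :
    -u * F * (1 - W) / (1 - F * u) = u * (X - F) / (1 - F * u) * (1 - Y * u) / (1 - u)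
      + (-u) * (X - F * u) / (1 - F * u) * (1 - Y) / (1 - u) := by
  have : -u * F * (1 - W) * (1 - u) = u * (X - F) * (1 - Y * u) - u * (X - F * u) * (1 - Y) := by
    linear_combination u * (1 - u) * hr
  generalize 1 - F * u = A at *
  have h2 : u * (X - F) / A * (1 - Y * u) / (1 - u) + -u * (X - F * u) / A * (1 - Y) / (1 - u) =
      (u * (X - F) * (1 - Y * u) - u * (X - F * u) * (1 - Y)) / A / (1 - u) := by ring
  rw [h2, ← this]
  field_simp

lemma Vc_rec0 (hq : q ≠ 0) (hqn : ∀ n : ℕ, n ≠ 0 → q ^ n ≠ 1) (I J : ℕ) (u : ℂ) (hu : u ≠ 0) (hu1 : u ≠ 1) (hI1 : 1 - q ^ I * u ≠ 0)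
    (b : ℤ) (c d : ℕ) 
    (hreg : ∀ p : ℕ, p ≤ c → 1 - q ^ ((I : ℤ) - ((c : ℤ) + d - p)) * u ≠ 0) :
    Vc q I (J + 1) u b c d = L00 q I u ((c : ℤ) + d - b) * Vc q I J (q⁻¹ * u) b c d +
      q ^ ((J : ℤ) + 1 - b) * L10 q I u ((c : ℤ) + d - b) * Vc q I J (q⁻¹ * u) (b - 1) c d := by
  unfold Vc
  rw [Finset.mul_sum, Finset.mul_sum, ← Finset.sum_add_distrib]
  refine Finset.sum_congr rfl fun p hp => ?_
  have hp' : p ≤ c := by simpa [Nat.lt_succ_iff] using hp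
  have hr := hreg p hp'
  have hu1' : 1 - u ≠ 0 := sub_ne_zero.2 hu1.symm
  rw [tterm_eq, tterm_eq, tterm_eq, kterm_shift hq I J u hu c p hp', pref_shift0 hq I J u hu]
  have hg1 : gfac q⁻¹ (q⁻¹ * u) b p = gfac q⁻¹ u b p * (1 - q⁻¹ ^ (b - p) * u) / (1 - u) := by
    rw [← gfac_shift]; field_simp
  have hg2 : gfac q⁻¹ (q⁻¹ * u) (b - 1) p = gfac q⁻¹ u b p * (1 - q⁻¹ ^ (b - p)) / (1 - u) := by
    rw [← gfac_shift' _ _ (hqn_inv hqn)]; field_simp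
  have hpo : (poch (q ^ I * (q⁻¹ * u)) q⁻¹ (c + d - p))⁻¹ =
      (1 - q ^ I * u) / (1 - q ^ ((I : ℤ) - ((c : ℤ) + d - p)) * u) *
        (poch (q ^ I * u) q⁻¹ (c + d - p))⁻¹ := by
    have h := poch_shift (q ^ I * u) q⁻¹ (c + d - p)
    have e : q⁻¹ ^ (c + d - p) * (q ^ I * u) = q ^ ((I : ℤ) - ((c : ℤ) + d - p)) * u := by
      rw [zpow_sub₀ hq, inv_pow, zpow_natCast,
        show (c : ℤ) + d - p = ((c + d - p : ℕ) : ℤ) by omega, zpow_natCast]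
      field_simp
    rw [e] at h
    rw [show q⁻¹ * (q ^ I * u) = q ^ I * (q⁻¹ * u) by ring] at h
    have h' : poch (q ^ I * (q⁻¹ * u)) q⁻¹ (c + d - p) = poch (q ^ I * u) q⁻¹ (c + d - p) *
       (1 - q ^ ((I : ℤ) - ((c : ℤ) + d - p)) * u) / (1 - q ^ I * u) := by
      rw [← h]; field_simp
    rw [h', inv_div, div_eq_mul_inv, mul_inv]; ring
  have hk := pref_shift0' hq I J u hu b c d
  have e1 : q ^ (-(c : ℤ)) * q ^ (c : ℤ) = 1 := by
    rw [← zpow_add₀ hq]; simp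
  have e2 : q ^ ((I : ℤ) - ((c : ℤ) + d - p)) = 
      q ^ ((I : ℤ) - ((c : ℤ) + d - b)) * q⁻¹ ^ (b - p) := by
    rw [inv_zpow', ← zpow_add₀ hq]; congr 1; ring
  simp only [div_eq_mul_inv (poch _ _ _)]
  rw [hpo, hg1, hg2]
  rw [e2] at hr ⊢
  unfold L00 L10
  set X := q ^ ((I : ℤ) - ((c : ℤ) + d - b))
  set Y := q⁻¹ ^ (b - p)
  set A := poch q⁻¹ q⁻¹ (c + d - p)
  set B := (poch (q ^ I * u) q⁻¹ (c + d - p))⁻¹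
  set G := gfac q⁻¹ u b p
  set K := kterm q I (J + 1) u c p
  set P := pref q I (J + 1) u b c d
  set P' := pref q I J (q⁻¹ * u) (b - 1) c d
  set Q := q ^ ((J : ℤ) + 1 - b)
  set C := q ^ (c : ℤ)
  set C' := q ^ (-(c : ℤ))
  set D := 1 - q ^ I * u
  have key : (1 - X * u) / D * ((1 - Y * u) / (1 - u)) * (D / (1 - X * Y * u))
     - u * ((1 - X) / D) * ((1 - Y) / (1 - u)) * (D / (1 - X * Y * u)) = 1 :=
    key0 hu1' hI1 hr
  calc P * (K * G * (A * B)) = P * (K * G * (A * B)) * 1 * 1 := by ring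
    _ = P * (K * G * (A * B)) * (C' * C) * ((1 - X * u) / D * ((1 - Y * u) / (1 - u)) * (D / (1 - X * Y * u)) 
     - u * ((1 - X) / D) * ((1 - Y) / (1 - u)) * (D / (1 - X * Y * u))) := by rw [key, e1]
    _ = _ := by
      linear_combination (-(1 - X) / D * C' * K * G * (1 - Y) / (1 - u) * A * (D / (1 - X * Y * u)) * B) * hk

lemma Vc_rec1 (hq : q ≠ 0) (hqn : ∀ n : ℕ, n ≠ 0 → q ^ n ≠ 1) (I J : ℕ) (u : ℂ) (hu : u ≠ 0) (hu1 : u ≠ 1) (hI1 : 1 - q ^ I * u ≠ 0)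
    (b : ℤ) (c d : ℕ) :
    q ^ ((J : ℤ) - d) * Vc q I (J + 1) u b c (d + 1) =
      L01 q I u ((c : ℤ) + (d + 1) - b) * Vc q I J (q⁻¹ * u) b c d +
      q ^ ((J : ℤ) + 1 - b) * L11 q I u ((c : ℤ) + (d + 1) - b) *
        Vc q I J (q⁻¹ * u) (b - 1) c d := by
  unfold Vc
  rw [Finset.mul_sum, Finset.mul_sum, Finset.mul_sum, ← Finset.sum_add_distrib]
  refine Finset.sum_congr rfl fun p hp => ?_
  have hp' : p ≤ c := by simpa [Nat.lt_succ_iff] using hp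
  have hu1' : 1 - u ≠ 0 := sub_ne_zero.2 hu1.symm
  rw [tterm_eq, tterm_eq, tterm_eq, kterm_shift hq I J u hu c p hp']
  have hg1 : gfac q⁻¹ (q⁻¹ * u) b p = gfac q⁻¹ u b p * (1 - q⁻¹ ^ (b - p) * u) / (1 - u) := by
    rw [← gfac_shift]; field_simp
  have hg2 : gfac q⁻¹ (q⁻¹ * u) (b - 1) p = gfac q⁻¹ u b p * (1 - q⁻¹ ^ (b - p)) / (1 - u) := by
    rw [← gfac_shift' _ _ (hqn_inv hqn)]; field_simp
  have hn : c + (d + 1) - p = (c + d - p) + 1 := by omega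
  have hpo : poch q⁻¹ q⁻¹ (c + (d + 1) - p) / poch (q ^ I * u) q⁻¹ (c + (d + 1) - p) =
      (1 - q⁻¹ ^ (c + (d + 1) - p)) / (1 - q ^ I * u) *
      (poch q⁻¹ q⁻¹ (c + d - p) / poch (q ^ I * (q⁻¹ * u)) q⁻¹ (c + d - p)) := by
    rw [hn, poch_succ, poch_succ_left (q ^ I * u), ← pow_succ,
      show q⁻¹ * (q ^ I * u) = q ^ I * (q⁻¹ * u) by ring, mul_comm (poch _ _ _) (1 - _),
      mul_div_mul_comm]
  have hk0 := pref_shift0 hq I J u hu b c d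
  have hk1 := pref_shift1 hq I J u hu b c d
  have hkk := pref_shift0' hq I J u hu b c d
  have e1 : q ^ (-(c : ℤ)) * q ^ (c : ℤ) = 1 := by
    rw [← zpow_add₀ hq]; simp
  have e2 : q ^ I * q⁻¹ ^ (c + (d + 1) - p) =
      q ^ ((I : ℤ) - ((c : ℤ) + (d + 1) - b)) * q⁻¹ ^ (b - p)  := by
    rw [inv_zpow', ← zpow_natCast q⁻¹, inv_zpow', ← zpow_natCast q, ← zpow_add₀ hq, ← zpow_add₀ hq]
    congr 1; push_cast [Nat.cast_sub (show p ≤ c + (d + 1) by omega)]; ring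
  rw [hpo, hg1, hg2]
  unfold L01 L11
  rw [hk0, zpow_natCast q I] at hk1
  rw [hk0]
  set X := q ^ ((I : ℤ) - ((c : ℤ) + (d + 1) - b))
  set Y := q⁻¹ ^ (b - p)
  set A := poch q⁻¹ q⁻¹ (c + d - p) / poch (q ^ I * (q⁻¹ * u)) q⁻¹ (c + d - p)
  set G := gfac q⁻¹ u b p
  set K := kterm q I (J + 1) u c p
  set P1 := pref q I (J + 1) u b c (d + 1)
  set P := pref q I (J + 1) u b c d
  set P' := pref q I J (q⁻¹ * u) (b - 1) c d
  set Q := q ^ ((J : ℤ) + 1 - b)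
  set Q' := q ^ ((J : ℤ) - d)
  set C := q ^ (c : ℤ)
  set C' := q ^ (-(c : ℤ))
  set W := q⁻¹ ^ (c + (d + 1) - p)
  set F := q ^ I
  have hC : C' * C = 1 := e1
  have hk1' : Q' * P1 = P * (-u) * F := by
    linear_combination (-C') * hk1 + (P * (-u) * F - Q' * P1) * hC
  have key : -u * F * (1 - W) / (1 - F * u) = u * (X - F) / (1 - F * u) * (1 - Y * u) / (1 - u)
      + (-u) * (X - F * u) / (1 - F * u) * (1 - Y) / (1 - u) := key1 hu1' hI1 e2
  calc Q' * (P1 * (K * G * ((1 - W) / (1 - F * u) * A)))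
      = (Q' * P1) * (K * G * ((1 - W) / (1 - F * u) * A)) := by ring
    _ = P * K * G * A * (-u * F * (1 - W) / (1 - F * u)) * 1 := by rw [hk1']; ring
    _ = P * K * G * A * (-u * F * (1 - W) / (1 - F * u)) * (C' * C) := by rw [hC]
    _ = _ := by
      rw [key]
      linear_combination (-(X - F * u) / (1 - F * u) * C' * K * G * (1 - Y) / (1 - u) * A) * hkk

/-- Base case telescoping sum. -/
lemma base_tel (s u : ℂ) (hs : ∀ n : ℕ, n ≠ 0 → s ^ n ≠ 1) (hu : u ≠ 0) (hu1 : u ≠ 1) (n : ℕ)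
    (m : ℕ) (hm : m ≤ n) :
    ∑ p ∈ Finset.range (m + 1), u ^ p * poch (1 / u) s p * poch u s (n + 1 - p) /
      (poch s s p * poch s s (n + 1 - p)) =
    u / ((u - 1) * (1 - s ^ (n + 1))) * (u ^ m * poch (1 / u) s (m + 1) * poch u s (n + 1 - m) /
      (poch s s m * poch s s (n - m))) := by
  have hn : 1 - s ^ (n + 1) ≠ 0 := sub_ne_zero.2 (hs _ (by omega)).symm
  have hu1' : u - 1 ≠ 0 := sub_ne_zero.2 hu1
  induction m with
  | zero =>
    simp only [zero_add, Finset.sum_range_one, pow_zero, poch_zero, poch_succ, Nat.sub_zero, pow_succ] at *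
    have := poch_ss_ne s hs n
    generalize poch s s n = A at *
    generalize poch u s n = B at *
    have e : 1 - 1 / u = (u - 1) / u := by field_simp
    simp only [one_mul, e]
    field_simp
  | succ m ih =>
    rw [Finset.sum_range_succ, ih (by omega)]
    obtain ⟨k, rfl⟩ : ∃ k, n = m + 1 + k := ⟨n - (m + 1), by omega⟩
    rw [show m + 1 + k + 1 - m = (k + 1) + 1 by omega, show m + 1 + k + 1 - (m + 1) = k + 1 by omega,
      show m + 1 + k - m = k + 1 by omega, show m + 1 + k - (m + 1) = k by omega]
    rw [poch_succ u s (k + 1), poch_succ (1 / u) s (m + 1), poch_succ s s m, poch_succ s s k]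
    have h1 := poch_ss_ne s hs m
    have h2 := poch_ss_ne s hs k
    have h3 : 1 - s ^ m * s ≠ 0 := by
      rw [← pow_succ]; exact sub_ne_zero.2 (hs _ (by omega)).symm
    have h4 : 1 - s ^ k * s ≠ 0 := by
      rw [← pow_succ]; exact sub_ne_zero.2 (hs _ (by omega)).symm
    rw [show s ^ (m + 1 + k + 1) = (s ^ m * s) * (s ^ k * s) by ring] at *
    rw [pow_succ s m, pow_succ s k, pow_succ u m]
    generalize poch s s m = A1 at *
    generalize poch s s k = A2 at *
    generalize poch u s (k + 1) = A3 at *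
    generalize poch (1 / u) s (m + 1) = A4 at *
    generalize s ^ m * s = X at *
    generalize s ^ k * s = Y at *
    generalize u ^ m = U at *
    have h5 : 1 - X * (1 / u) = (u - X) / u := by field_simp
    rw [h5]
    have e : (1 - Y * u) * (1 - X) + (u - 1) * (1 - X * Y) - (u - X) * (1 - Y) = 0 := by ring
    generalize hP : 1 - X = P at *
    generalize hQ : 1 - Y = Q at *
    generalize hT : 1 - X * Y = T at *
    field_simp
    linear_combination (U * A4 * A3) * e

lemma Vc_base (hqn : ∀ n : ℕ, n ≠ 0 → q ^ n ≠ 1) (I : ℕ) (u : ℂ) (hu : u ≠ 0) (hu1 : u ≠ 1) (b : ℤ) (c : ℕ) (hb : b ≤ c)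
    (hreg : poch (q ^ I * u) q⁻¹ c ≠ 0) :
    Vc q I 0 u b c 0 = if b = 0 then 1 else 0 := by
  have hreg' : ∀ p, poch (q ^ I * u) q⁻¹ (c - p) ≠ 0 := by
    intro p
    unfold poch at hreg ⊢
    rw [Finset.prod_ne_zero_iff] at hreg ⊢
    exact fun k hk => hreg k (by simp at hk ⊢; omega)
  have hs := hqn_inv hqn
  have ht : ∀ p, tterm q I 0 u b c 0 p =
      u ^ p * poch (1 / u) q⁻¹ p * gfac q⁻¹ u b p / poch q⁻¹ q⁻¹ p := by
    intro p
    have h1 := hreg' p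
    have h2 := poch_ss_ne _ hs (c - p)
    have h3 := poch_ss_ne _ hs p
    unfold tterm
    simp only [Nat.cast_zero, sub_zero, zero_mul, zpow_zero, pow_zero, zpow_natCast, add_zero,
      mul_one]
    generalize poch q⁻¹ q⁻¹ p = A at *
    generalize poch q⁻¹ q⁻¹ (c - p) = B at *
    generalize poch (q ^ I * u) q⁻¹ (c - p) = C at *
    field_simp
  unfold Vc
  rw [← Finset.mul_sum]
  simp only [ht]
  rcases lt_trichotomy b 0 with h | h | h
  · rw [if_neg (by omega), Finset.sum_eq_zero, mul_zero]
    intro p _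
    simp [gfac, show ¬ ((p : ℤ) ≤ b) by omega]
  · subst h
    rw [if_pos rfl, Finset.sum_eq_single 0]
    · simp [gfac, pref, tri, poch_zero]
    · intro p _ hp
      simp [gfac, hp]
    · simp
  · rw [if_neg (by omega)]
    obtain ⟨n, rfl⟩ : ∃ n : ℕ, b = ((n + 1 : ℕ) : ℤ) := ⟨(b - 1).toNat, by omega⟩
    have hnc : n + 1 ≤ c := by omega
    have hsub : ∑ p ∈ Finset.range (c + 1), u ^ p * poch (1 / u) q⁻¹ p *
        gfac q⁻¹ u ((n + 1 : ℕ) : ℤ) p / poch q⁻¹ q⁻¹ p =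
        ∑ p ∈ Finset.range (n + 1 + 1), u ^ p * poch (1 / u) q⁻¹ p * poch u q⁻¹ (n + 1 - p) /
          (poch q⁻¹ q⁻¹ p * poch q⁻¹ q⁻¹ (n + 1 - p)) := by
      rw [← Finset.sum_subset (s₁ := Finset.range (n + 1 + 1))]
      · refine Finset.sum_congr rfl fun p hp => ?_
        have hp' : p ≤ n + 1 := by simpa [Nat.lt_succ_iff] using hp
        rw [gfac, if_pos (by exact_mod_cast hp'), show (((n + 1 : ℕ) : ℤ) - p).toNat = n + 1 - p by omega]
        rw [mul_div_assoc', div_div]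
        congr 1; ring
      · intro p; simp; omega
      · intro p _ hp
        have : n + 1 < p := by simp at hp; omega
        simp [gfac, show ¬ ((p : ℤ) ≤ (n : ℤ) + 1) by omega]
    rw [hsub, Finset.sum_range_succ, base_tel _ _ hs hu hu1 n n le_rfl]
    have hn : 1 - q⁻¹ ^ n * q⁻¹ ≠ 0 := by
      rw [← pow_succ]; exact sub_ne_zero.2 (hs _ (by omega)).symm
    have hu1' : u - 1 ≠ 0 := sub_ne_zero.2 hu1
    have h3 := poch_ss_ne _ hs n
    rw [show n + 1 - n = 0 + 1 by omega, Nat.sub_self, Nat.sub_self, poch_succ u, poch_zero, poch_succ q⁻¹,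
      poch_zero, pow_succ u, pow_succ q⁻¹]
    generalize poch q⁻¹ q⁻¹ n = A at *
    generalize poch (1 / u) q⁻¹ (n + 1) = B at *
    generalize 1 - q⁻¹ ^ n * q⁻¹ = C at *
    rw [mul_eq_zero]; right
    simp only [pow_zero, one_mul, mul_one]
    field_simp
    ring

end closedForm

/-! ### Part 2: the q-exchangeable vectors and the row operators -/

section vectors

/-- unnormalized q-exchangeable vector of `a` ones on sites `0..k-1`. -/
noncomputable def Evec (q : ℂ) : ℕ → ℤ → (ℕ → Fin 2) → ℂ
  | 0, a, _ => if a = 0 then 1 else 0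
  | k + 1, a, x => if x k = 0 then q ^ a * Evec q k a x else Evec q k (a - 1) x

noncomputable def Zr (q : ℂ) : ℕ → ℤ → ℂ
  | 0, a => if a = 0 then 1 else 0
  | k + 1, a => q ^ a * Zr q k a + Zr q k (a - 1)

variable {q : ℂ}

lemma Evec_zero_of (k : ℕ) (a : ℤ) (x : ℕ → Fin 2) (h : a < 0 ∨ (k : ℤ) < a) : Evec q k a x = 0 := by
  induction k generalizing a with
  | zero => simp [Evec]; omega
  | succ k ih =>
    push_cast at h
    simp only [Evec]
    split_ifs
    · rw [ih _ (by omega), mul_zero]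
    · rw [ih _ (by omega)]

lemma Evec_congr (k : ℕ) (a : ℤ) (x y : ℕ → Fin 2) (h : ∀ i < k, x i = y i) :
    Evec q k a x = Evec q k a y := by
  induction k generalizing a with
  | zero => simp [Evec]
  | succ k ih =>
    simp only [Evec, h k (by omega)]
    rw [ih _ (fun i hi => h i (by omega)), ih _ (fun i hi => h i (by omega))]

lemma Evec_head (hq : q ≠ 0) (k : ℕ) (a : ℤ) (x : ℕ → Fin 2) :
    Evec q (k + 1) a x = if x 0 = 0 then Evec q k a (fun i => x (i + 1))
      else q ^ ((k : ℤ) + 1 - a) * Evec q k (a - 1) (fun i => x (i + 1)) := by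
  induction k generalizing a with
  | zero =>
    simp only [Evec]
    by_cases h0 : x 0 = 0 <;> by_cases ha : a = 0 <;> by_cases ha1 : a - 1 = 0 <;>
      simp_all
    have : a = 1 := by omega
    subst this; simp
  | succ k ih =>
    rw [Evec, ih, ih]
    simp only [Evec]
    by_cases h1 : x (k + 1) = 0 <;> by_cases h0 : x 0 = 0 <;> simp only [h1, h0, if_true, if_false]
    · rw [← mul_assoc, ← mul_assoc, ← zpow_add₀ hq, ← zpow_add₀ hq]
      congr 2; push_cast; ring
    · congr 2; push_cast; ring

lemma Zr_zero_of (k : ℕ) (a : ℤ) (h : a < 0 ∨ (k : ℤ) < a) : Zr q k a = 0 := by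
  induction k generalizing a with
  | zero => simp [Zr]; omega
  | succ k ih =>
    push_cast at h
    simp only [Zr]
    rw [ih _ (by omega), ih _ (by omega)]; simp

lemma Zr_head (hq : q ≠ 0) (k : ℕ) (a : ℤ) :
    Zr q (k + 1) a = Zr q k a + q ^ ((k : ℤ) + 1 - a) * Zr q k (a - 1) := by
  induction k generalizing a with
  | zero =>
    simp only [Zr]
    by_cases ha : a = 0
    · subst ha; simp
    · by_cases ha1 : a = 1
      · subst ha1; simp
      · simp [ha, show a - 1 ≠ 0 by omega]
  | succ k ih =>
    have h2 : ∀ a, Zr q (k + 1) a = q ^ a * Zr q k a + Zr q k (a - 1) := fun _ => rfl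
    rw [Zr]
    have e1 : q ^ a * q ^ ((k : ℤ) + 1 - a) = q ^ (((k + 1 : ℕ) : ℤ) + 1 - a) * q ^ (a - 1) := by
      rw [← zpow_add₀ hq, ← zpow_add₀ hq]; congr 1; push_cast; ring
    have e2 : q ^ ((k : ℤ) + 1 - (a - 1)) = q ^ (((k + 1 : ℕ) : ℤ) + 1 - a) := by
      congr 1; push_cast; ring
    linear_combination (Zr q k (a - 1)) * e1 + Zr q k (a - 1 - 1) * e2 + q ^ a * ih a + ih (a - 1)
      - h2 a - q ^ (((k + 1 : ℕ) : ℤ) + 1 - a) * h2 (a - 1)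

lemma Zr_ratio (hq : q ≠ 0) (k : ℕ) (a : ℤ) :
    (1 - q ^ a) * Zr q k a = (1 - q ^ ((k : ℤ) + 1 - a)) * Zr q k (a - 1) := by
  have h1 := Zr_head hq k a
  have h2 : Zr q (k + 1) a = q ^ a * Zr q k a + Zr q k (a - 1) := rfl
  linear_combination h2 - h1

lemma Zr_zero_right (k : ℕ) : Zr q k 0 = 1 := by
  induction k with
  | zero => simp [Zr]
  | succ k ih => rw [Zr, ih, Zr_zero_of _ _ (by omega)]; simp

lemma Zr_ne (hq : q ≠ 0) (hqn : ∀ n : ℕ, n ≠ 0 → q ^ n ≠ 1) (k a : ℕ) (h : a ≤ k) : Zr q k a ≠ 0 := by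
  induction a with
  | zero => simp [Zr_zero_right]
  | succ a ih =>
    have := Zr_ratio hq k ((a + 1 : ℕ) : ℤ)
    intro h0
    rw [h0, mul_zero, show ((a + 1 : ℕ) : ℤ) - 1 = a by push_cast; ring] at this
    rcases mul_eq_zero.1 this.symm with h1 | h1
    · rw [show (k : ℤ) + 1 - ((a + 1 : ℕ) : ℤ) = ((k - a : ℕ) : ℤ) by omega, zpow_natCast] at h1
      exact hqn _ (by omega) (sub_eq_zero.1 h1).symm
    · exact ih (by omega) h1

/-- Two-site operator on functions of infinite configurations. -/
noncomputable def op2 (i j : ℕ) (T : Matrix (Fin 2 × Fin 2) (Fin 2 × Fin 2) ℂ) :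
    ((ℕ → Fin 2) → ℂ) →ₗ[ℂ] ((ℕ → Fin 2) → ℂ) where
  toFun ψ := fun x => ∑ α : Fin 2, ∑ β : Fin 2,
    T (x i, x j) (α, β) * ψ (Function.update (Function.update x i α) j β)
  map_add' f g := by
    funext x; simp only [Pi.add_apply, mul_add, Finset.sum_add_distrib]
  map_smul' c f := by
    funext x; simp only [Pi.smul_apply, smul_eq_mul, RingHom.id_apply, Finset.mul_sum]
    refine Finset.sum_congr rfl fun _ _ => Finset.sum_congr rfl fun _ _ => by ring

noncomputable def rowOp (q : ℂ) (u : ℂ) (j : ℕ) : ℕ → (((ℕ → Fin 2) → ℂ) →ₗ[ℂ] ((ℕ → Fin 2) → ℂ))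
  | 0 => LinearMap.id
  | k + 1 => (rowOp q u j k).comp (op2 k j (Rmat q (u * q ^ k)))

lemma op2_col0 (k j : ℕ) (hkj : k < j) (w : ℂ) (a : ℤ) (φ : (ℕ → Fin 2) → ℂ)
    (hφ : ∀ x i α, (i < k + 1 ∨ i = j) → φ (Function.update x i α) = φ x) :
    op2 k j (Rmat q w) (fun x => Evec q (k + 1) a x * (if x j = 0 then 1 else 0) * φ x) =
      q ^ a • (fun x => Evec q k a x * (if x j = 0 then 1 else 0) * ((if x k = 0 then 1 else 0) * φ x))
      + (w * (1 - q) / (1 - q * w)) • (fun x => Evec q k (a - 1) x * (if x j = 0 then 0 else 1) *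
          ((if x k = 0 then 1 else 0) * φ x))
      + ((1 - w) / (1 - q * w)) • (fun x => Evec q k (a - 1) x * (if x j = 0 then 1 else 0) *
          ((if x k = 0 then 0 else 1) * φ x)) := by
  funext x
  have hE : ∀ α β b, Evec q k b (Function.update (Function.update x k α) j β) = Evec q k b x := by
    intro α β b
    refine Evec_congr _ _ _ _ fun i hi => ?_
    rw [Function.update_of_ne (by omega), Function.update_of_ne (by omega)]
  have hP : ∀ α β, φ (Function.update (Function.update x k α) j β) = φ x := by
    intro α β
    rw [hφ _ _ _ (by simp), hφ _ _ _ (by simp)]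
  have hk : ∀ α β, Function.update (Function.update x k α) j β k = α := by
    intro α β
    rw [Function.update_of_ne (by omega), Function.update_self]
  simp only [op2, LinearMap.coe_mk, AddHom.coe_mk, Fin.sum_univ_two, Evec, hE, hP, hk,
    Function.update_self, Pi.add_apply, Pi.smul_apply, smul_eq_mul, Rmat]
  rcases Fin.exists_fin_two.1 ⟨x k, rfl⟩ with h1 | h1 <;>
  rcases Fin.exists_fin_two.1 ⟨x j, rfl⟩ with h2 | h2 <;>
  · rw [h1, h2]; simp [Rent]; try ring

lemma op2_col1 (k j : ℕ) (hkj : k < j) (w : ℂ) (a : ℤ) (φ : (ℕ → Fin 2) → ℂ)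
    (hφ : ∀ x i α, (i < k + 1 ∨ i = j) → φ (Function.update x i α) = φ x) :
    op2 k j (Rmat q w) (fun x => Evec q (k + 1) a x * (if x j = 0 then 0 else 1) * φ x) =
      (q ^ a * (q * (1 - w) / (1 - q * w))) • (fun x => Evec q k a x * (if x j = 0 then 0 else 1) *
          ((if x k = 0 then 1 else 0) * φ x))
      + (q ^ a * ((1 - q) / (1 - q * w))) • (fun x => Evec q k a x * (if x j = 0 then 1 else 0) *
          ((if x k = 0 then 0 else 1) * φ x))
      + (fun x => Evec q k (a - 1) x * (if x j = 0 then 0 else 1) *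
          ((if x k = 0 then 0 else 1) * φ x)) := by
  funext x
  have hE : ∀ α β b, Evec q k b (Function.update (Function.update x k α) j β) = Evec q k b x := by
    intro α β b
    refine Evec_congr _ _ _ _ fun i hi => ?_
    rw [Function.update_of_ne (by omega), Function.update_of_ne (by omega)]
  have hP : ∀ α β, φ (Function.update (Function.update x k α) j β) = φ x := by
    intro α β
    rw [hφ _ _ _ (by simp), hφ _ _ _ (by simp)]
  have hk : ∀ α β, Function.update (Function.update x k α) j β k = α := by
    intro α β
    rw [Function.update_of_ne (by omega), Function.update_self]
  simp only [op2, LinearMap.coe_mk, AddHom.coe_mk, Fin.sum_univ_two, Evec, hE, hP, hk,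
    Function.update_self, Pi.add_apply, Pi.smul_apply, smul_eq_mul, Rmat]
  rcases Fin.exists_fin_two.1 ⟨x k, rfl⟩ with h1 | h1 <;>
  rcases Fin.exists_fin_two.1 ⟨x j, rfl⟩ with h2 | h2 <;>
  · rw [h1, h2]; simp [Rent]; try ring

/-- unnormalized row action -/
lemma row_raw (u : ℂ) (j k : ℕ) (hkj : k ≤ j) (hden : ∀ i, i ≤ k → 1 - q ^ i * u ≠ 0)
    (hq : q ≠ 0)
    (φ : (ℕ → Fin 2) → ℂ) (hφ : ∀ x i α, (i < k ∨ i = j) → φ (Function.update x i α) = φ x)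
    (a : ℤ) :
    (rowOp q u j k (fun x => Evec q k a x * (if x j = 0 then 1 else 0) * φ x) =
      fun x => ((1 - q ^ ((k : ℤ) - a) * u) / (1 - q ^ k * u) * Evec q k a x * (if x j = 0 then 1 else 0)
        + u * q ^ ((k : ℤ) - a) * (1 - q ^ ((k : ℤ) - a + 1)) / (1 - q ^ k * u) *
          Evec q k (a - 1) x * (if x j = 0 then 0 else 1)) * φ x) ∧
    (rowOp q u j k (fun x => Evec q k a x * (if x j = 0 then 0 else 1) * φ x) =
      fun x => ((q ^ ((k : ℤ) - a) - q ^ k * u) / (1 - q ^ k * u) * Evec q k a x *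
          (if x j = 0 then 0 else 1)
        + (1 - q ^ (a + 1)) / (1 - q ^ k * u) *
          Evec q k (a + 1) x * (if x j = 0 then 1 else 0)) * φ x) := by
  induction k generalizing a φ with
  | zero =>
    have hu : (1 : ℂ) - u ≠ 0 := by simpa using hden 0 le_rfl
    constructor
    · funext x
      by_cases h0 : a = 0
      · subst h0
        simp [rowOp, Evec, hu]
      · by_cases h1 : a = 1
        · subst h1; simp [rowOp, Evec]
        · simp [rowOp, Evec, h0, show a - 1 ≠ 0 by omega]
    · funext x
      by_cases h0 : a = 0
      · subst h0
        simp [rowOp, Evec, hu]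
      · by_cases h1 : a = -1
        · subst h1; simp [rowOp, Evec]
        · simp [rowOp, Evec, h0, show a + 1 ≠ 0 by omega]
  | succ k ih =>
    have hφ0 : ∀ x i α, (i < k ∨ i = j) → (fun x => (if x k = 0 then (1 : ℂ) else 0) * φ x)
        (Function.update x i α) = (fun x => (if x k = 0 then (1 : ℂ) else 0) * φ x) x := by
      intro x i α h
      simp only
      rw [hφ _ _ _ (by omega), Function.update_of_ne (by omega)]
    have hφ1 : ∀ x i α, (i < k ∨ i = j) → (fun x => (if x k = 0 then (0 : ℂ) else 1) * φ x)
        (Function.update x i α) = (fun x => (if x k = 0 then (0 : ℂ) else 1) * φ x) x := by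
      intro x i α h
      simp only
      rw [hφ _ _ _ (by omega), Function.update_of_ne (by omega)]
    have hd : ∀ i, i ≤ k → 1 - q ^ i * u ≠ 0 := fun i hi => hden i (by omega)
    have ih0 := fun a => ih (by omega) hd (fun x => (if x k = 0 then (1 : ℂ) else 0) * φ x) hφ0 a
    have ih1 := fun a => ih (by omega) hd (fun x => (if x k = 0 then (0 : ℂ) else 1) * φ x) hφ1 a
    have hDk := hden k (by omega)
    have hDk1 := hden (k + 1) le_rfl
    have hw : 1 - q * (u * q ^ k) ≠ 0 := by
      rw [pow_succ] at hDk1; convert hDk1 using 1; ring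
    have z1 : q ^ (((k + 1 : ℕ) : ℤ) - a) = q * q ^ ((k : ℤ) - a) := by
      rw [← zpow_one_add₀ hq]; congr 1; push_cast; ring
    have z1' : q ^ (((k + 1 : ℕ) : ℤ) - a + 1) = q * q * q ^ ((k : ℤ) - a) := by
      rw [zpow_add_one₀ hq, z1]; ring
    have z2 : q ^ ((k : ℤ) - (a - 1)) = q * q ^ ((k : ℤ) - a) := by
      rw [← zpow_one_add₀ hq]; congr 1; ring
    have z2' : q ^ ((k : ℤ) - (a - 1) + 1) = q * q * q ^ ((k : ℤ) - a) := by
      rw [zpow_add_one₀ hq, z2]; ring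
    have z3 : q ^ ((k : ℤ) - a + 1) = q * q ^ ((k : ℤ) - a) := by
      rw [zpow_add_one₀ hq]; ring
    have z4 : q ^ a = q * q ^ (a - 1) := by
      rw [← zpow_one_add₀ hq]; congr 1; ring
    have z5 : q ^ (a + 1) = q * q * q ^ (a - 1) := by
      rw [zpow_add_one₀ hq, z4]; ring
    have z6 : q ^ k = q * (q ^ (a - 1) * q ^ ((k : ℤ) - a)) := by
      rw [← zpow_add₀ hq, ← zpow_one_add₀ hq, ← zpow_natCast]; congr 1; ring
    have a1 : a - 1 + 1 = a := by ring
    have a2 : a + 1 - 1 = a := by ring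
    simp only [rowOp, LinearMap.comp_apply]
    rw [op2_col0 k j (by omega) _ _ _ hφ, op2_col1 k j (by omega) _ _ _ hφ]
    simp only [map_add, map_smul]
    rw [(ih0 a).1, (ih0 (a - 1)).2, (ih1 (a - 1)).1, (ih0 a).2, (ih1 a).1, (ih1 (a - 1)).2]
    have hw2 : 1 - q * (u * q ^ k) = 1 - q ^ (k + 1) * u := by ring
    rw [hw2]
    obtain ⟨D, hD⟩ : ∃ D, D = 1 - q ^ k * u := ⟨_, rfl⟩
    obtain ⟨D1, hD1⟩ : ∃ D1, D1 = 1 - q ^ (k + 1) * u := ⟨_, rfl⟩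
    rw [← hD, ← hD1]
    rw [← hD] at hDk
    rw [← hD1] at hDk1
    rw [pow_succ] at hD1
    constructor
    · funext x
      simp only [Pi.add_apply, Pi.smul_apply, smul_eq_mul, Evec, a1, a2, z1, z1', z2, z2', z3, z4, z5,
        pow_succ]
      rw [z6] at hD hD1 ⊢
      generalize q ^ (a - 1) = A at *
      generalize q ^ ((k : ℤ) - a) = X at *
      generalize Evec q k a x = E0 at *
      generalize Evec q k (a - 1) x = E1 at *
      generalize Evec q k (a - 1 - 1) x = E2 at *
      clear ih ih0 ih1 hden hd hw hw2
      rcases Fin.exists_fin_two.1 ⟨x k, rfl⟩ with h1 | h1 <;>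
      rcases Fin.exists_fin_two.1 ⟨x j, rfl⟩ with h2 | h2 <;>
      · rw [h1, h2]
        simp only [if_true, one_ne_zero, if_false, mul_one, mul_zero, zero_mul, one_mul, add_zero, zero_add]
        field_simp
        try rw [hD]
        try rw [hD1]
        ring
    · funext x
      simp only [Pi.add_apply, Pi.smul_apply, smul_eq_mul, Evec, a1, a2, z1, z1', z2, z2', z3, z4, z5,
        pow_succ]
      rw [z6] at hD hD1 ⊢
      generalize q ^ (a - 1) = A at *
      generalize q ^ ((k : ℤ) - a) = X at *
      generalize Evec q k a x = E0 at *
      generalize Evec q k (a - 1) x = E1 at *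
      generalize Evec q k (a + 1) x = E2 at *
      clear ih ih0 ih1 hden hd hw hw2
      rcases Fin.exists_fin_two.1 ⟨x k, rfl⟩ with h1 | h1 <;>
      rcases Fin.exists_fin_two.1 ⟨x j, rfl⟩ with h2 | h2 <;>
      · rw [h1, h2]
        simp only [if_true, one_ne_zero, if_false, mul_one, mul_zero, zero_mul, one_mul, add_zero, zero_add]
        field_simp
        try rw [hD]
        try rw [hD1]
        ring

end vectors

/-! ### Part 3: the action of all rows on q-exchangeable vectors -/

section rows

variable {q : ℂ}

/-- normalized q-exchangeable vector -/
noncomputable def Nv (q : ℂ) (I : ℕ) (a : ℤ) (x : ℕ → Fin 2) : ℂ := Evec q I a x / Zr q I a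

lemma Nv_zero_of (I : ℕ) (a : ℤ) (x : ℕ → Fin 2) (h : a < 0 ∨ (I : ℤ) < a) : Nv q I a x = 0 := by
  rw [Nv, Evec_zero_of _ _ _ h, zero_div]

lemma Zr_ne' (hq : q ≠ 0) (hqn : ∀ n : ℕ, n ≠ 0 → q ^ n ≠ 1) (k : ℕ) (a : ℤ) (h0 : 0 ≤ a) (h1 : a ≤ k) : Zr q k a ≠ 0 := by
  obtain ⟨n, rfl⟩ := Int.eq_ofNat_of_zero_le h0
  exact Zr_ne hq hqn k n (by omega)

lemma poch_ne (hq : q ≠ 0) (I : ℕ) (v : ℂ) (n : ℕ) (h : ∀ k : ℕ, k < n → 1 - q ^ ((I : ℤ) - k) * v ≠ 0) :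
    poch (q ^ I * v) q⁻¹ n ≠ 0 := by
  unfold poch
  refine Finset.prod_ne_zero_iff.2 fun k hk => ?_
  have := h k (Finset.mem_range.1 hk)
  rw [zpow_sub₀ hq, zpow_natCast, zpow_natCast] at this
  convert this using 2
  rw [inv_pow]; field_simp

lemma row_norm0 (hq : q ≠ 0) (hqn : ∀ n : ℕ, n ≠ 0 → q ^ n ≠ 1) (u : ℂ) (I j : ℕ) (hj : I ≤ j) (hden : ∀ i, i ≤ I → 1 - q ^ i * u ≠ 0)
    (φ : (ℕ → Fin 2) → ℂ) (hφ : ∀ x i α, (i < I ∨ i = j) → φ (Function.update x i α) = φ x)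
    (a : ℤ) (h0 : 0 ≤ a) (h1 : a ≤ I) :
    rowOp q u j I (fun x => Nv q I a x * (if x j = 0 then 1 else 0) * φ x) =
      L00 q I u a • (fun x => Nv q I a x * (if x j = 0 then 1 else 0) * φ x) +
      L01 q I u a • (fun x => Nv q I (a - 1) x * (if x j = 0 then 0 else 1) * φ x) := by
  have hr := (row_raw u j I hj hden hq φ hφ a).1
  have e : (fun x => Nv q I a x * (if x j = 0 then 1 else 0) * φ x) =
      (Zr q I a)⁻¹ • (fun x => Evec q I a x * (if x j = 0 then 1 else 0) * φ x) := by
    funext x; simp only [Nv, Pi.smul_apply, smul_eq_mul]; ring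
  have hZ := Zr_ne' hq hqn I a h0 h1
  have hD := hden I le_rfl
  conv_lhs => rw [e, map_smul, hr]
  funext x
  simp only [Pi.smul_apply, Pi.add_apply, smul_eq_mul, L00, L01, Nv]
  have key : (Zr q I a)⁻¹ * (u * q ^ ((I : ℤ) - a) * (1 - q ^ ((I : ℤ) - a + 1)) / (1 - q ^ I * u) *
      Evec q I (a - 1) x) = u * (q ^ ((I : ℤ) - a) - q ^ I) / (1 - q ^ I * u) *
      (Evec q I (a - 1) x / Zr q I (a - 1)) := by
    by_cases ha : a = 0
    · rw [Evec_zero_of _ _ _ (by omega)]; simp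
    · have hZ1 := Zr_ne' hq hqn I (a - 1) (by omega) (by omega)
      have hrat := Zr_ratio hq I a
      have e1 : q ^ I = q ^ ((I : ℤ) - a) * q ^ a := by
        rw [← zpow_add₀ hq, ← zpow_natCast]; congr 1; ring
      have e2 : (I : ℤ) - a + 1 = (I : ℤ) + 1 - a := by ring
      rw [e2]
      obtain ⟨D, hDD⟩ : ∃ D, D = 1 - q ^ I * u := ⟨_, rfl⟩
      rw [← hDD] at hD ⊢
      rw [e1]
      generalize q ^ ((I : ℤ) - a) = X at *
      generalize q ^ ((I : ℤ) + 1 - a) = Y at *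
      generalize q ^ a = A at *
      field_simp
      linear_combination (-1 : ℂ) * u * X * Evec q I (a - 1) x * hrat
  linear_combination (if x j = 0 then 0 else 1) * φ x * key

lemma row_norm1 (hq : q ≠ 0) (hqn : ∀ n : ℕ, n ≠ 0 → q ^ n ≠ 1) (u : ℂ) (I j : ℕ) (hj : I ≤ j) (hden : ∀ i, i ≤ I → 1 - q ^ i * u ≠ 0)
    (φ : (ℕ → Fin 2) → ℂ) (hφ : ∀ x i α, (i < I ∨ i = j) → φ (Function.update x i α) = φ x)
    (a : ℤ) (h0 : 0 ≤ a) (h1 : a ≤ I) :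
    rowOp q u j I (fun x => Nv q I a x * (if x j = 0 then 0 else 1) * φ x) =
      L11 q I u a • (fun x => Nv q I a x * (if x j = 0 then 0 else 1) * φ x) +
      L10 q I u a • (fun x => Nv q I (a + 1) x * (if x j = 0 then 1 else 0) * φ x) := by
  have hr := (row_raw u j I hj hden hq φ hφ a).2
  have e : (fun x => Nv q I a x * (if x j = 0 then 0 else 1) * φ x) =
      (Zr q I a)⁻¹ • (fun x => Evec q I a x * (if x j = 0 then 0 else 1) * φ x) := by
    funext x; simp only [Nv, Pi.smul_apply, smul_eq_mul]; ring
  have hZ := Zr_ne' hq hqn I a h0 h1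
  have hD := hden I le_rfl
  conv_lhs => rw [e, map_smul, hr]
  funext x
  simp only [Pi.smul_apply, Pi.add_apply, smul_eq_mul, L11, L10, Nv]
  have key : (Zr q I a)⁻¹ * ((1 - q ^ (a + 1)) / (1 - q ^ I * u) *
      Evec q I (a + 1) x) = (1 - q ^ ((I : ℤ) - a)) / (1 - q ^ I * u) *
      (Evec q I (a + 1) x / Zr q I (a + 1)) := by
    by_cases ha : a = I
    · rw [Evec_zero_of _ _ _ (by omega)]; simp
    · have hZ1 := Zr_ne' hq hqn I (a + 1) (by omega) (by omega)
      have hrat := Zr_ratio hq I (a + 1)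
      rw [show (I : ℤ) + 1 - (a + 1) = (I : ℤ) - a by ring, show a + 1 - 1 = a by ring] at hrat
      obtain ⟨D, hDD⟩ : ∃ D, D = 1 - q ^ I * u := ⟨_, rfl⟩
      rw [← hDD] at hD ⊢
      generalize q ^ ((I : ℤ) - a) = X at *
      generalize q ^ (a + 1) = A at *
      field_simp
      linear_combination Evec q I (a + 1) x * hrat
  linear_combination (if x j = 0 then 1 else 0) * φ x * key

/-- all rows: sites `m, m+1, …`, the first one with parameter `v`, applied first. -/
noncomputable def rowsOp (q : ℂ) (I : ℕ) :
    ℕ → ℂ → ℕ → (((ℕ → Fin 2) → ℂ) →ₗ[ℂ] ((ℕ → Fin 2) → ℂ))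
  | 0, _, _ => LinearMap.id
  | J + 1, v, m => (rowsOp q I J (q⁻¹ * v) (m + 1)).comp (rowOp q v m I)

lemma rows_main (hq : q ≠ 0) (hqn : ∀ n : ℕ, n ≠ 0 → q ^ n ≠ 1) (I J : ℕ) (v : ℂ) (hv : v ≠ 0) (m : ℕ) (hm : I ≤ m)
    (hreg : ∀ n : ℤ, -(J : ℤ) ≤ n → n ≤ I → 1 - q ^ n * v ≠ 0)
    (a : ℤ) (h0 : 0 ≤ a) (h1 : a ≤ I) (b : ℤ) (φ : (ℕ → Fin 2) → ℂ)
    (hφ : ∀ x i α, (i < I ∨ (m ≤ i ∧ i < m + J)) → φ (Function.update x i α) = φ x) :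
    rowsOp q I J v m (fun x => Nv q I a x * Evec q J b (fun i => x (i + m)) * φ x) =
      fun x => ∑ d ∈ Finset.range (J + 1), Vc q I J v b (a + b - d).toNat d *
        (Nv q I (a + b - d) x * Evec q J d (fun i => x (i + m)) * φ x) := by
  induction J generalizing v m a b φ with
  | zero =>
    have hv1 : v ≠ 1 := by
      intro h; apply hreg 0 (by simp) (by simp); simp [h]
    funext x
    simp only [rowsOp, LinearMap.id_apply, zero_add, Finset.sum_range_one, Nat.cast_zero, sub_zero,
      Evec, if_true]
    by_cases hr : a + b < 0 ∨ (I : ℤ) < a + b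
    · rw [Nv_zero_of _ _ _ hr]
      have : b ≠ 0 := by omega
      simp [this]
    · push Not at hr
      have := Vc_base hqn I v hv hv1 b (a + b).toNat (by omega)
        (poch_ne hq I v _ fun k hk => hreg _ (by push_cast; omega) (by omega))
      rw [this]
      by_cases hb : b = 0
      · subst hb; simp
      · simp [hb]
  | succ J ih =>
    have hv1 : v ≠ 1 := by
      intro h; apply hreg 0 (by push_cast; omega) (by simp); simp [h]
    have hI1 : 1 - q ^ I * v ≠ 0 := by
      have := hreg I (by push_cast; omega) le_rfl; rwa [zpow_natCast] at this
    have hden : ∀ i, i ≤ I → 1 - q ^ i * v ≠ 0 := by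
      intro i hi
      have := hreg i (by push_cast; omega) (by omega); rwa [zpow_natCast] at this
    have hv' : q⁻¹ * v ≠ 0 := mul_ne_zero (inv_ne_zero hq) hv
    have hreg' : ∀ n : ℤ, -(J : ℤ) ≤ n → n ≤ I → 1 - q ^ n * (q⁻¹ * v) ≠ 0 := by
      intro n h2 h3
      rw [← mul_assoc, ← zpow_sub_one₀ hq]
      exact hreg _ (by push_cast; omega) (by omega)
    have hEup : ∀ (b : ℤ) (x : ℕ → Fin 2) (i : ℕ) (α : Fin 2), (i < I ∨ i = m) →
        Evec q J b (fun l => Function.update x i α (l + (m + 1))) = Evec q J b (fun l => x (l + (m + 1))) := by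
      intro b x i α h
      refine Evec_congr _ _ _ _ fun l _ => ?_
      rw [Function.update_of_ne (by omega)]
    -- decomposition at the site `m`
    have hsplit : (fun x => Nv q I a x * Evec q (J + 1) b (fun i => x (i + m)) * φ x) =
        (fun x => Nv q I a x * (if x m = 0 then 1 else 0) *
          (Evec q J b (fun i => x (i + (m + 1))) * φ x)) +
        q ^ ((J : ℤ) + 1 - b) • (fun x => Nv q I a x * (if x m = 0 then 0 else 1) *
          (Evec q J (b - 1) (fun i => x (i + (m + 1))) * φ x)) := by
      funext x
      rw [Evec_head hq]
      simp only [zero_add, Pi.add_apply, Pi.smul_apply, smul_eq_mul, add_assoc, add_comm 1 m]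
      split_ifs <;> ring
    have hφ' : ∀ (b : ℤ) x i α, (i < I ∨ i = m) →
        (fun x => Evec q J b (fun i => x (i + (m + 1))) * φ x) (Function.update x i α) =
        (fun x => Evec q J b (fun i => x (i + (m + 1))) * φ x) x := by
      intro b x i α h
      simp only
      rw [hEup _ _ _ _ h, hφ _ _ _ (by omega)]
    have ihd : ∀ (g : Fin 2 → ℂ) (a b : ℤ) (l : ℂ), (l = 0 ∨ (0 ≤ a ∧ a ≤ I)) →
        l • rowsOp q I J (q⁻¹ * v) (m + 1) (fun x => Nv q I a x * g (x m) *
          (Evec q J b (fun i => x (i + (m + 1))) * φ x)) =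
        l • fun x => ∑ d ∈ Finset.range (J + 1), Vc q I J (q⁻¹ * v) b (a + b - d).toNat d *
        (Nv q I (a + b - d) x * Evec q J d (fun i => x (i + (m + 1))) * (g (x m) * φ x)) := by
      intro g a b l hl
      rcases hl with hl | hl
      · simp [hl]
      · congr 1
        rw [← ih (q⁻¹ * v) hv' (m + 1) (by omega) hreg' a hl.1 hl.2 b (fun x => g (x m) * φ x)]
        · congr 1; funext x; ring
        · intro x i α h
          rw [hφ _ _ _ (by omega), Function.update_of_ne (by omega)]
    have hL01 : L01 q I v a = 0 ∨ (0 ≤ a - 1 ∧ a - 1 ≤ I) := by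
      by_cases ha : a = 0
      · left; simp [L01, ha]
      · right; omega
    have hL10 : L10 q I v a = 0 ∨ (0 ≤ a + 1 ∧ a + 1 ≤ I) := by
      by_cases ha : a = I
      · left; simp [L10, ha]
      · right; omega
    have i1 := ihd (fun y => if y = 0 then 1 else 0) a b (L00 q I v a) (Or.inr ⟨h0, h1⟩)
    have i2 := ihd (fun y => if y = 0 then 0 else 1) (a - 1) b (L01 q I v a) hL01
    have i3 := ihd (fun y => if y = 0 then 0 else 1) a (b - 1) (L11 q I v a) (Or.inr ⟨h0, h1⟩)
    have i4 := ihd (fun y => if y = 0 then 1 else 0) (a + 1) (b - 1) (L10 q I v a) hL10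
    rw [hsplit]
    simp only [rowsOp, LinearMap.comp_apply]
    rw [map_add, map_smul, row_norm0 hq hqn v I m hm hden _ (hφ' b) a h0 h1,
      row_norm1 hq hqn v I m hm hden _ (hφ' (b - 1)) a h0 h1]
    simp only [map_add, map_smul]
    rw [i1, i2, i3, i4]
    clear i1 i2 i3 i4 ihd
    funext x
    simp only [Pi.add_apply, Pi.smul_apply, smul_eq_mul, Evec_head hq, zero_add]
    have eshift : (fun i => x (i + 1 + m)) = fun i => x (i + (m + 1)) := by
      funext i; congr 1; ring
    rw [eshift]
    by_cases hx : x m = 0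
    · simp only [hx, if_true, one_mul, zero_mul, mul_zero, Finset.sum_const_zero, add_zero, zero_add]
      rw [Finset.sum_range_succ _ (J + 1), Evec_zero_of (q := q) J ((J + 1 : ℕ) : ℤ) _ (by push_cast; omega)]
      simp only [mul_zero, zero_mul, add_zero, Finset.mul_sum]
      rw [← Finset.sum_add_distrib]
      refine Finset.sum_congr rfl fun d hd => ?_
      rw [show a + 1 + (b - 1) - (d : ℤ) = a + b - d by ring]
      by_cases hr : a + b - d < 0 ∨ (I : ℤ) < a + b - d
      · rw [Nv_zero_of _ _ _ hr]; simp
      · push Not at hr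
        have hdJ : d ≤ J := by simpa [Nat.lt_succ_iff] using hd
        have hrec := Vc_rec0 hq hqn I J v hv hv1 hI1 b (a + b - d).toNat d (by
          intro p hp
          apply hreg <;> push_cast <;> omega)
        rw [show (((a + b - d).toNat : ℕ) : ℤ) + d - b = a by omega] at hrec
        rw [hrec]; ring
    · simp only [hx, if_false, one_mul, zero_mul, mul_zero, Finset.sum_const_zero, add_zero, zero_add]
      rw [Finset.sum_range_succ' _ (J + 1), Evec_zero_of (q := q) J (((0 : ℕ) : ℤ) - 1) _ (by simp)]
      simp only [mul_zero, zero_mul, add_zero, Finset.mul_sum]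
      rw [← Finset.sum_add_distrib]
      refine Finset.sum_congr rfl fun d hd => ?_
      rw [show a - 1 + b - (d : ℤ) = a + b - ((d + 1 : ℕ) : ℤ) by push_cast; ring,
        show a + (b - 1) - (d : ℤ) = a + b - ((d + 1 : ℕ) : ℤ) by push_cast; ring,
        show ((d + 1 : ℕ) : ℤ) - 1 = d by push_cast; ring,
        show (J : ℤ) + 1 - ((d + 1 : ℕ) : ℤ) = J - d by push_cast; ring]
      by_cases hr : a + b - ((d + 1 : ℕ) : ℤ) < 0 ∨ (I : ℤ) < a + b - ((d + 1 : ℕ) : ℤ)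
      · rw [Nv_zero_of _ _ _ hr]; simp
      · push Not at hr
        have hrec := Vc_rec1 hq hqn I J v hv hv1 hI1 b (a + b - ((d + 1 : ℕ) : ℤ)).toNat d
        rw [show (((a + b - ((d + 1 : ℕ) : ℤ)).toNat : ℕ) : ℤ) + ((d : ℤ) + 1) - b = a by
          push_cast at hr ⊢; omega] at hrec
        linear_combination (-1 : ℂ) * Nv q I (a + b - ((d + 1 : ℕ) : ℤ)) x *
          Evec q J d (fun i => x (i + (m + 1))) * φ x * hrec

end rows

/-! ### Part 4: transfer to finite configurations -/

section transfer

variable {q : ℂ}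

def extc {n : ℕ} (x : Fin n → Fin 2) : ℕ → Fin 2 := fun i => if h : i < n then x ⟨i, h⟩ else 0

lemma extc_val {n : ℕ} (x : Fin n → Fin 2) (i : Fin n) : extc x i = x i := by
  simp [extc]

lemma extc_update {n : ℕ} (x : Fin n → Fin 2) (i : Fin n) (α : Fin 2) :
    extc (Function.update x i α) = Function.update (extc x) i α := by
  funext k
  by_cases hk : k = i
  · subst hk; simp [extc_val]
  · rw [Function.update_of_ne hk]
    unfold extc
    split_ifs with h
    · rw [Function.update_of_ne]; intro e; apply hk; rw [← e]
    · rfl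

lemma emb2_mulVec {n : ℕ} (i j : Fin n) (hij : i ≠ j) (T : Matrix (Fin 2 × Fin 2) (Fin 2 × Fin 2) ℂ)
    (ψ : (ℕ → Fin 2) → ℂ) :
    emb2 i j T *ᵥ (fun x => ψ (extc x)) = fun x => op2 i j T ψ (extc x) := by
  funext x
  simp only [Matrix.mulVec, dotProduct, op2, LinearMap.coe_mk, AddHom.coe_mk]
  rw [← Fintype.sum_prod_type']
  symm
  refine Finset.sum_of_injOn (fun p : Fin 2 × Fin 2 => Function.update (Function.update x i p.1) j p.2)
    ?_ (fun _ _ => by simp) ?_ ?_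
  · intro p _ p' _ h
    simp only at h
    have hj := congrFun h j
    have hi := congrFun h i
    simp only [Function.update_self, Function.update_of_ne hij] at hi hj
    exact Prod.ext hi hj
  · intro y _ hy
    have : ¬ ∀ k, k ≠ i → k ≠ j → x k = y k := by
      intro h
      apply hy
      refine ⟨(y i, y j), by simp, ?_⟩
      funext k
      simp only
      by_cases hkj : k = j
      · subst hkj; simp
      · rw [Function.update_of_ne hkj]
        by_cases hki : k = i
        · subst hki; simp
        · rw [Function.update_of_ne hki, h k hki hkj]
    simp only [emb2, if_neg this, mul_zero, zero_mul]
  · rintro ⟨α, β⟩ _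
    have : ∀ k, k ≠ i → k ≠ j → x k = Function.update (Function.update x i α) j β k := by
      intro k h1 h2
      rw [Function.update_of_ne h2, Function.update_of_ne h1]
    simp only [emb2, if_pos this, mul_one, Function.update_self, Function.update_of_ne hij,
      extc_update, extc_val]

noncomputable def compUp (G : ℕ → (((ℕ → Fin 2) → ℂ) →ₗ[ℂ] ((ℕ → Fin 2) → ℂ))) :
    ℕ → (((ℕ → Fin 2) → ℂ) →ₗ[ℂ] ((ℕ → Fin 2) → ℂ))
  | 0 => LinearMap.id
  | k + 1 => (compUp G k).comp (G k)

lemma prod_mulVec {n : ℕ} (G : ℕ → (((ℕ → Fin 2) → ℂ) →ₗ[ℂ] ((ℕ → Fin 2) → ℂ))) (k : ℕ)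
    (g : Fin k → Matrix (Fin n → Fin 2) (Fin n → Fin 2) ℂ)
    (h : ∀ i ψ, g i *ᵥ (fun x => ψ (extc x)) = fun x => G i ψ (extc x)) (ψ : (ℕ → Fin 2) → ℂ) :
    ((List.finRange k).map g).prod *ᵥ (fun x => ψ (extc x)) = fun x => compUp G k ψ (extc x) := by
  induction k generalizing ψ with
  | zero => simp [compUp]
  | succ k ih =>
    rw [List.finRange_succ_last, List.map_append, List.prod_append, ← Matrix.mulVec_mulVec, List.map_map]
    simp only [List.map_cons, List.map_nil, List.prod_singleton]
    rw [h, ih (g ∘ Fin.castSucc)]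
    · rfl
    · intro i ψ
      exact h i.castSucc ψ

lemma rowOp_eq (u : ℂ) (j k : ℕ) : rowOp q u j k = compUp (fun b => op2 b j (Rmat q (u * q ^ b))) k := by
  induction k with
  | zero => rfl
  | succ k ih => rw [rowOp, compUp, ih]

lemma rowsOp_eq (hq : q ≠ 0) (u : ℂ) (I k : ℕ) (hk : k ≤ I) :
    compUp (fun a => rowOp q (u * q ^ ((a : ℤ) + 1 - I)) (2 * I - 1 - a) I) k =
      rowsOp q I k (u * q ^ ((k : ℤ) - I)) (2 * I - k) := by
  induction k with
  | zero => rfl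
  | succ k ih =>
    rw [compUp, rowsOp, ih (by omega)]
    congr 2
    · rw [mul_left_comm, ← zpow_neg_one, ← zpow_add₀ hq]; congr 2; push_cast; ring
    · omega
    all_goals first | omega | (push_cast; rfl)

lemma Rring_mulVec (hq : q ≠ 0) (I : ℕ) (u : ℂ) (ψ : (ℕ → Fin 2) → ℂ) :
    Rring I q u *ᵥ (fun x => ψ (extc x)) = fun x => rowsOp q I I u I ψ (extc x) := by
  have h1 := rowsOp_eq hq u I I le_rfl
  rw [sub_self, zpow_zero, mul_one, show 2 * I - I = I by omega] at h1
  rw [← h1]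
  unfold Rring
  refine prod_mulVec _ I _ ?_ ψ
  intro a' ψ
  rw [rowOp_eq]
  refine prod_mulVec _ I _ ?_ ψ
  intro b' ψ
  have ha := a'.isLt
  have hb := b'.isLt
  rw [emb2_mulVec _ _ (by intro h; have := congrArg Fin.val h; simp only at this; omega)]
  simp only
  congr 4
  rw [mul_assoc, ← zpow_natCast, ← zpow_add₀ hq]
  congr 2; ring

/-! q-exchangeable weights -/

lemma invCount_succ (k : ℕ) (x : Fin (k + 1) → Fin 2) :
    invCount x = invCount (fun i : Fin k => x i.castSucc) +
      (if x (Fin.last k) = 0 then ∑ i : Fin k, (x i.castSucc : ℕ) else 0) := by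
  unfold invCount
  simp only [Finset.card_filter, Fintype.sum_prod_type, Fin.sum_univ_castSucc, Finset.sum_add_distrib]
  have e1 : ∀ i : Fin k, ¬ (Fin.last k < i.castSucc) := fun i => by
    simp [not_lt, Fin.le_last]
  simp only [e1, false_and, if_false, Finset.sum_const_zero, lt_irrefl, add_zero,
    Fin.castSucc_lt_castSucc_iff, Fin.castSucc_lt_last, true_and]
  congr 1
  split_ifs with h
  · refine Finset.sum_congr rfl fun i _ => ?_
    rw [h]
    rcases Fin.exists_fin_two.1 ⟨x i.castSucc, rfl⟩ with h1 | h1 <;> rw [h1] <;> simp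
  · refine Finset.sum_eq_zero fun i _ => ?_
    have h2 : x (Fin.last k) = 1 := by
      rcases Fin.exists_fin_two.1 ⟨x (Fin.last k), rfl⟩ with h1 | h1
      · exact absurd h1 h
      · exact h1
    rw [h2]
    rcases Fin.exists_fin_two.1 ⟨x i.castSucc, rfl⟩ with h1 | h1 <;> rw [h1] <;> simp

lemma Evec_eq (k : ℕ) (a : ℤ) (y : ℕ → Fin 2) (x : Fin k → Fin 2) (h : ∀ i : Fin k, y i = x i) :
    Evec q k a y = if (((∑ j, (x j : ℕ)) : ℕ) : ℤ) = a then q ^ invCount x else 0 := by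
  induction k generalizing a with
  | zero => simp [Evec, invCount, eq_comm]
  | succ k ih =>
    have hl : y k = x (Fin.last k) := h (Fin.last k)
    have ih' := fun a => ih a (fun i => x i.castSucc) (fun i => h i.castSucc)
    rw [Evec, ih', ih', hl, invCount_succ, Fin.sum_univ_castSucc]
    rcases Fin.exists_fin_two.1 ⟨x (Fin.last k), rfl⟩ with h1 | h1
    · simp only [h1, if_true, Fin.val_zero, add_zero]
      split_ifs with h2
      · rw [← h2, zpow_natCast, pow_add]; ring
      · simp
    · simp only [h1, one_ne_zero, if_false, Fin.val_one, add_zero]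
      congr 1
      apply propext; push_cast; omega

lemma sum_Evec (k : ℕ) (a : ℤ) : ∑ x : Fin k → Fin 2, Evec q k a (extc x) = Zr q k a := by
  induction k generalizing a with
  | zero => simp [Evec, Zr]
  | succ k ih =>
    rw [← (Fin.snocEquiv (fun _ => Fin 2)).sum_comp, Fintype.sum_prod_type, Fin.sum_univ_two]
    have hk : ∀ (t : Fin 2) (y : Fin k → Fin 2), extc (Fin.snocEquiv (fun _ => Fin 2) (t, y)) k = t := by
      intro t y
      have := extc_val (Fin.snocEquiv (fun _ => Fin 2) (t, y)) (Fin.last k)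
      rw [Fin.val_last] at this
      rw [this]; simp [Fin.snocEquiv]
    have hE : ∀ (b : ℤ) (t : Fin 2) (y : Fin k → Fin 2),
        Evec q k b (extc (Fin.snocEquiv (fun _ => Fin 2) (t, y))) = Evec q k b (extc y) := by
      intro b t y
      refine Evec_congr _ _ _ _ fun i hi => ?_
      have := extc_val (Fin.snocEquiv (fun _ => Fin 2) (t, y)) (Fin.castSucc ⟨i, hi⟩)
      simp only [Fin.val_castSucc] at this
      rw [this]
      change Fin.snoc (α := fun _ => Fin 2) y t (Fin.castSucc ⟨i, hi⟩) = _
      rw [Fin.snoc_castSucc]; simp [extc, hi]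
    simp only [Evec, hk, hE, if_true, one_ne_zero, if_false, ← Finset.mul_sum, ih, Zr]

lemma Zq_eq (I m : ℕ) : Zq I q m = Zr q I m := by
  rw [← sum_Evec, Zq, Finset.sum_filter]
  refine Finset.sum_congr rfl fun x _ => ?_
  rw [Evec_eq I m (extc x) x (extc_val x)]
  simp only [Nat.cast_inj]

lemma hatPi_eq (I : ℕ) (y : ℕ → Fin 2) (x : Fin I → Fin 2) (h : ∀ i : Fin I, y i = x i)
    (m : Fin (I + 1)) : hatPiMat I q x m = Nv q I (m : ℕ) y := by
  rw [hatPiMat, Nv, Evec_eq I _ y x h, Zq_eq]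
  simp only [Nat.cast_inj]
  split_ifs <;> simp

lemma sum_Pi (I : ℕ) (c : Fin (I + 1)) (a : ℤ) :
    ∑ x : Fin I → Fin 2, PiMat I c x * Evec q I a (extc x) = if a = (c : ℕ) then Zr q I a else 0 := by
  have : ∀ x : Fin I → Fin 2, PiMat I c x * Evec q I a (extc x) =
      if a = (c : ℕ) then Evec q I a (extc x) else 0 := by
    intro x
    rw [PiMat, Evec_eq I a (extc x) x (extc_val x)]
    by_cases h1 : ∑ j, (x j : ℕ) = c
    · rw [h1]; simp only [if_true, one_mul, eq_comm]
      split_ifs <;> rfl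
    · rw [if_neg h1, zero_mul]
      split_ifs with h2 h3
      · exact absurd (by rw [h2] at h3; exact_mod_cast h3) h1
      · rfl
      · rfl
  simp only [this]
  split_ifs with h
  · rw [sum_Evec]
  · simp

def halfEquiv (I : ℕ) : (Fin (2 * I) → Fin 2) ≃ (Fin I → Fin 2) × (Fin I → Fin 2) where
  toFun x := (firstHalf x, secondHalf x)
  invFun p := fun k => if h : k.1 < I then p.1 ⟨k.1, h⟩ else p.2 ⟨k.1 - I, by have := k.isLt; omega⟩
  left_inv x := by
    funext k
    simp only [firstHalf, secondHalf]
    split_ifs with h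
    · rfl
    · congr 1; apply Fin.ext; simp only; omega
  right_inv p := by
    refine Prod.ext ?_ ?_
    · funext k; simp [firstHalf]
    · funext k; simp [secondHalf]

lemma sum_half (I : ℕ) (f g : (Fin I → Fin 2) → ℂ) :
    ∑ x : Fin (2 * I) → Fin 2, f (firstHalf x) * g (secondHalf x) = (∑ y, f y) * ∑ z, g z := by
  rw [Finset.sum_mul_sum, ← Fintype.sum_prod_type', ← (halfEquiv I).sum_comp]
  rfl

lemma RI_eq (hq : q ≠ 0) (hqn : ∀ n : ℕ, n ≠ 0 → q ^ n ≠ 1) (I : ℕ) (u : ℂ) (hu : u ≠ 0)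
    (hreg : ∀ n : ℤ, -(I : ℤ) ≤ n → n ≤ I → 1 - q ^ n * u ≠ 0) (a b c d : Fin (I + 1)) :
    RI I q u (c, d) (a, b) = if (a : ℕ) + (b : ℕ) = (c : ℕ) + (d : ℕ) then
      Vc q I I u (b : ℕ) c d * Zr q I (d : ℕ) / Zr q I (b : ℕ) else 0 := by
  have ha := a.isLt
  have hc := c.isLt
  have hd := d.isLt
  have hfirst : ∀ (x : Fin (2 * I) → Fin 2) (i : Fin I), extc x i = firstHalf x i := by
    intro x i
    exact extc_val x ⟨i.1, by have := i.isLt; omega⟩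
  have hsecond : ∀ (x : Fin (2 * I) → Fin 2) (i : Fin I), extc x (i + I) = secondHalf x i := by
    intro x i
    exact extc_val x ⟨i.1 + I, by have := i.isLt; omega⟩
  have hcol : (fun x => hatPiPiMat I q x (a, b)) = (Zr q I (b : ℕ))⁻¹ • fun x : Fin (2 * I) → Fin 2 =>
      (fun y : ℕ → Fin 2 => Nv q I (a : ℕ) y * Evec q I (b : ℕ) (fun i => y (i + I)) * 1) (extc x) := by
    funext x
    simp only [hatPiPiMat, Pi.smul_apply, smul_eq_mul]
    rw [hatPi_eq I (extc x) (firstHalf x) (hfirst x),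
      hatPi_eq I (fun i => extc x (i + I)) (secondHalf x) (hsecond x)]
    simp only [Nv]; ring
  have hmv : ∀ x, (Rring I q u * hatPiPiMat I q) x (a, b) = (Zr q I (b : ℕ))⁻¹ *
      ∑ d ∈ Finset.range (I + 1), Vc q I I u (b : ℕ) ((a : ℕ) + (b : ℕ) - d : ℤ).toNat d *
        (Nv q I ((a : ℕ) + (b : ℕ) - d : ℤ) (extc x) * Evec q I d (fun i => extc x (i + I))) := by
    intro x
    have e1 : (Rring I q u * hatPiPiMat I q) x (a, b) =
      (Rring I q u *ᵥ (fun x => hatPiPiMat I q x (a, b))) x := rfl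
    rw [e1, hcol, Matrix.mulVec_smul, Rring_mulVec hq I u (fun y : ℕ → Fin 2 =>
        Nv q I (a : ℕ) y * Evec q I (b : ℕ) (fun i => y (i + I)) * 1),
      rows_main hq hqn I I u hu I le_rfl hreg (a : ℕ) (by omega) (by omega) (b : ℕ) (fun _ => 1)
        (fun _ _ _ _ => rfl)]
    simp only [Pi.smul_apply, smul_eq_mul, mul_one]
  have e2 : RI I q u (c, d) (a, b) =
      ∑ x, PiPiMat I (c, d) x * (Rring I q u * hatPiPiMat I q) x (a, b) := by
    rw [RI, Matrix.mul_assoc]; rfl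
  have hN : ∀ (x : Fin (2 * I) → Fin 2) (a' : ℤ), Nv q I a' (extc x) = Evec q I a' (extc (firstHalf x)) / Zr q I a' := by
    intro x a'
    rw [Nv, Evec_congr I a' (extc x) (extc (firstHalf (I := I) x))]
    intro i hi
    exact (hfirst x ⟨i, hi⟩).trans (extc_val (firstHalf x) ⟨i, hi⟩).symm
  have hE : ∀ (x : Fin (2 * I) → Fin 2) (a' : ℤ), Evec q I a' (fun i => extc x (i + I)) = Evec q I a' (extc (secondHalf x)) := by
    intro x a'
    refine Evec_congr I a' _ _ ?_
    intro i hi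
    exact (hsecond x ⟨i, hi⟩).trans (extc_val (secondHalf x) ⟨i, hi⟩).symm
  have e3 : ∀ x, PiPiMat I (c, d) x * (Rring I q u * hatPiPiMat I q) x (a, b) =
      ∑ d' ∈ Finset.range (I + 1), (Zr q I (b : ℕ))⁻¹ *
        (Vc q I I u (b : ℕ) ((a : ℕ) + (b : ℕ) - d' : ℤ).toNat d' *
        (Zr q I ((a : ℕ) + (b : ℕ) - d' : ℤ))⁻¹) *
        ((PiMat I c (firstHalf x) * Evec q I ((a : ℕ) + (b : ℕ) - d' : ℤ) (extc (firstHalf x))) *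
        (PiMat I d (secondHalf x) * Evec q I d' (extc (secondHalf x)))) := by
    intro x
    rw [hmv, PiPiMat, Finset.mul_sum, Finset.mul_sum]
    refine Finset.sum_congr rfl fun d' _ => ?_
    rw [hN, hE]; ring
  rw [e2]
  simp only [e3]
  rw [Finset.sum_comm]
  simp only [← Finset.mul_sum]
  have e4 : ∀ d' : ℕ, ∑ x : Fin (2 * I) → Fin 2,
      ((PiMat I c (firstHalf x) * Evec q I ((a : ℕ) + (b : ℕ) - d' : ℤ) (extc (firstHalf x))) *
        (PiMat I d (secondHalf x) * Evec q I d' (extc (secondHalf x)))) =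
      (if ((a : ℕ) + (b : ℕ) - d' : ℤ) = (c : ℕ) then Zr q I ((a : ℕ) + (b : ℕ) - d' : ℤ) else 0) *
      (if (d' : ℤ) = (d : ℕ) then Zr q I d' else 0) := by
    intro d'
    rw [sum_half I (fun y => PiMat I c y * Evec q I ((a : ℕ) + (b : ℕ) - d' : ℤ) (extc y))
      (fun y => PiMat I d y * Evec q I d' (extc y)), sum_Pi, sum_Pi]
  simp only [e4]
  rw [Finset.sum_eq_single (d : ℕ)]
  · by_cases h : (a : ℕ) + (b : ℕ) = (c : ℕ) + (d : ℕ)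
    · have h' : ((a : ℕ) + (b : ℕ) - (d : ℕ) : ℤ) = (c : ℕ) := by omega
      have hZ := Zr_ne hq hqn I c (by omega)
      rw [if_pos h, h', if_pos rfl, if_pos rfl, Int.toNat_natCast]
      field_simp
    · rw [if_neg h, if_neg (by omega)]; simp
  · intro d' _ hne
    rw [if_neg (c := (d' : ℤ) = (d : ℕ)) (by omega)]; simp
  · intro h; exact absurd (Finset.mem_range.2 hd) h

end transfer

/-! ### Part 5: final algebra -/

section final

variable {q : ℂ}

lemma Zr_poch (hq : q ≠ 0) (hqn : ∀ n : ℕ, n ≠ 0 → q ^ n ≠ 1) (k b : ℕ) :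
    Zr q k b * poch q⁻¹ q⁻¹ b = poch (q ^ k) q⁻¹ b * ((-1) ^ (b : ℤ) * q ^ (-tri b)) := by
  induction b with
  | zero => simp [Zr_zero_right, poch_zero, tri]
  | succ b ih =>
    have hr := Zr_ratio hq k ((b + 1 : ℕ) : ℤ)
    have e1 : ((b + 1 : ℕ) : ℤ) - 1 = b := by push_cast; ring
    have e2 : q ^ ((k : ℤ) + 1 - ((b + 1 : ℕ) : ℤ)) = q⁻¹ ^ b * q ^ k := by
      rw [show (k : ℤ) + 1 - ((b + 1 : ℕ) : ℤ) = -(b : ℤ) + k by push_cast; ring, zpow_add₀ hq,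
        zpow_neg, zpow_natCast, zpow_natCast, inv_pow]
    rw [e1, e2, zpow_natCast] at hr
    have hne : 1 - q ^ (b + 1) ≠ 0 := sub_ne_zero.2 (hqn _ (by omega)).symm
    have e3 : q ^ (-tri ((b + 1 : ℕ) : ℤ)) = q ^ (-tri (b : ℤ)) * q⁻¹ ^ (b + 1) := by
      rw [tri_sub ((b + 1 : ℕ) : ℤ), e1, neg_add, zpow_add₀ hq, zpow_neg q ((b + 1 : ℕ) : ℤ),
        zpow_natCast, inv_pow]
    have e4 : ((-1 : ℂ)) ^ ((b + 1 : ℕ) : ℤ) = (-1) ^ (b : ℤ) * (-1) := by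
      rw [zpow_natCast, zpow_natCast, pow_succ]
    have e5 : 1 - q⁻¹ ^ b * q⁻¹ = - q⁻¹ ^ (b + 1) * (1 - q ^ (b + 1)) := by
      have : q⁻¹ ^ (b + 1) * q ^ (b + 1) = 1 := by
        rw [← mul_pow, inv_mul_cancel₀ hq, one_pow]
      rw [pow_succ] at this ⊢
      linear_combination (-1 : ℂ) * this
    rw [poch_succ, poch_succ, e3, e4, e5]
    linear_combination (-1 : ℂ) * q⁻¹ ^ (b + 1) * poch q⁻¹ q⁻¹ b * hr
      - q⁻¹ ^ (b + 1) * (1 - q⁻¹ ^ b * q ^ k) * ih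

lemma final_algebra (hq : q ≠ 0) (hqn : ∀ n : ℕ, n ≠ 0 → q ^ n ≠ 1) (I : ℕ) (u : ℂ) (hu : u ≠ 0) (a b c d : ℕ) (hb : b ≤ I) (hd : d ≤ I)
    (h : a + b = c + d) :
    Vc q I I u b c d * Zr q I d / Zr q I b =
        u ^ ((d : ℤ) - (b : ℤ)) * q ^ (((d : ℤ) - (a : ℤ)) * (I : ℤ)) *
          ∑ p ∈ Finset.range (min b c + 1),
            Phi q⁻¹ (c - p) (c + d - p) u (q ^ I * u) *
              Phi q⁻¹ p b (q ^ I / u) (q ^ I) := by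
  have hss := poch_ss_ne q⁻¹ (hqn_inv hqn)
  have hm1 : ((-1 : ℂ)) ≠ 0 := by simp
  have Hb := Zr_poch hq hqn I b
  have Hd := Zr_poch hq hqn I d
  have hZb := Zr_ne hq hqn I b hb
  have hpb : poch (q ^ I) q⁻¹ b ≠ 0 := by
    intro h0
    rw [h0, zero_mul] at Hb
    exact mul_ne_zero hZb (hss b) Hb
  have hsb : ((-1 : ℂ)) ^ (b : ℤ) ≠ 0 := zpow_ne_zero _ hm1
  have hqb : q ^ (-tri b) ≠ 0 := zpow_ne_zero _ hq
  have Hd' : Zr q I d = poch (q ^ I) q⁻¹ d * ((-1) ^ (d : ℤ) * q ^ (-tri d)) / poch q⁻¹ q⁻¹ d := by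
    rw [eq_div_iff (hss d), Hd]
  have Hb' : Zr q I b = poch (q ^ I) q⁻¹ b * ((-1) ^ (b : ℤ) * q ^ (-tri b)) / poch q⁻¹ q⁻¹ b := by
    rw [eq_div_iff (hss b), Hb]
  have hpref : pref q I I u b c d * ((-1) ^ (d : ℤ) * q ^ (-tri d)) =
      u ^ ((d : ℤ) - (b : ℤ)) * q ^ (((d : ℤ) - (a : ℤ)) * (I : ℤ)) * ((-1) ^ (b : ℤ) * q ^ (-tri b)) := by
    unfold pref
    have h' : (a : ℤ) + b = c + d := by exact_mod_cast h
    rw [show -u = (-1) * u by ring, mul_zpow]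
    have s1 : ((-1 : ℂ)) ^ ((d : ℤ) - b) * (-1) ^ (d : ℤ) = (-1) ^ (b : ℤ) := by
      rw [← zpow_add₀ hm1, show (d : ℤ) - b + d = 2 * (d - b) + b by ring, zpow_add₀ hm1, zpow_mul]
      norm_num
    have s2 : q ^ ((d : ℤ) * I - ((c : ℤ) + d - b) * I + tri d - tri b) * q ^ (-tri d) =
        q ^ (((d : ℤ) - (a : ℤ)) * (I : ℤ)) * q ^ (-tri b) := by
      rw [← zpow_add₀ hq, ← zpow_add₀ hq, ← h']; congr 1; ring
    rw [← s1]
    linear_combination (-1 : ℂ) ^ ((d : ℤ) - b) * (-1) ^ (d : ℤ) * u ^ ((d : ℤ) - (b : ℤ)) * s2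
  have hterm : ∀ p, p ≤ min b c → Phi q⁻¹ (c - p) (c + d - p) u (q ^ I * u) *
      Phi q⁻¹ p b (q ^ I / u) (q ^ I) = tterm q I I u b c d p *
      (poch (q ^ I) q⁻¹ d / poch q⁻¹ q⁻¹ d * (poch q⁻¹ q⁻¹ b / poch (q ^ I) q⁻¹ b)) := by
    intro p hp
    have hqI : q ^ I ≠ 0 := pow_ne_zero _ hq
    have hpb' : p ≤ b := le_trans hp (min_le_left _ _)
    have hpc' : p ≤ c := le_trans hp (min_le_right _ _)
    unfold Phi tterm gfac
    rw [if_pos (by exact_mod_cast hpb'), show ((b : ℤ) - p).toNat = b - p by omega,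
      show c + d - p - (c - p) = d by omega, show q ^ I * u / u = q ^ I by field_simp,
      show q ^ I / (q ^ I / u) = u by field_simp, sub_self, zpow_zero, one_mul,
      show q ^ ((I : ℤ) * ((c : ℤ) - p)) = (q ^ I) ^ (c - p) by
        rw [zpow_mul, ← Nat.cast_sub hpc', zpow_natCast, zpow_natCast]]
    simp only [div_eq_mul_inv, mul_inv]
    ring
  have hV : Vc q I I u b c d =
      pref q I I u b c d * ∑ p ∈ Finset.range (min b c + 1), tterm q I I u b c d p := by
    unfold Vc
    rw [← Finset.mul_sum]
    congr 1
    symm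
    refine Finset.sum_subset ?_ ?_
    · intro p hp
      have := min_le_right b c
      simp only [Finset.mem_range] at hp ⊢; omega
    · intro p hp hp'
      have : ¬ ((p : ℤ) ≤ b) := by
        simp only [Finset.mem_range] at hp hp'; omega
      rw [tterm, gfac, if_neg this]; simp only [mul_zero, zero_mul, zero_div]
  rw [Finset.sum_congr rfl fun p hp => hterm p (by simpa [Nat.lt_succ_iff] using hp), ← Finset.sum_mul,
    hV, Hd', Hb']
  generalize ∑ p ∈ Finset.range (min b c + 1), tterm q I I u b c d p = S
  have e : pref q I I u b c d * S * (poch (q ^ I) q⁻¹ d * ((-1) ^ (d : ℤ) * q ^ (-tri d)) / poch q⁻¹ q⁻¹ d)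
      = S * (poch (q ^ I) q⁻¹ d / poch q⁻¹ q⁻¹ d) *
        (pref q I I u b c d * ((-1) ^ (d : ℤ) * q ^ (-tri d))) := by
    ring
  rw [e, hpref]
  have hsd := hss d
  have hsb' := hss b
  generalize q ^ (-tri b) = Q at *
  generalize ((-1 : ℂ)) ^ (b : ℤ) = M at *
  generalize poch q⁻¹ q⁻¹ b = B1 at *
  generalize poch q⁻¹ q⁻¹ d = B2 at *
  generalize poch (q ^ I) q⁻¹ b = B3 at *
  generalize poch (q ^ I) q⁻¹ d = B4 at *
  generalize u ^ ((d : ℤ) - (b : ℤ)) * q ^ (((d : ℤ) - (a : ℤ)) * (I : ℤ)) = W at *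
  field_simp

end final

/-- **Explicit formula for the fused `R`-matrix**:
`R^I(u)_{a,b}^{c,d} = 𝟙_{a+b=c+d} u^{d−b} q^{(d−a)I}
  Σ_{p=0}^{min(b,c)} Φ_{q⁻¹}(c−p, c+d−p; u, q^I u) Φ_{q⁻¹}(p, b; q^I/u, q^I)`. -/
theorem fused_R_explicit (I : ℕ) (hI : 1 ≤ I) (q : ℝ) (hq0 : 0 < q) (hq1 : q < 1)
    (u : ℂ) (hu : u ≠ 0)
    (hreg : ∀ m : ℤ, -(I : ℤ) ≤ m → m ≤ (I : ℤ) → u * (q : ℂ) ^ m ≠ 1)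
    (a b c d : Fin (I + 1)) :
    RI I (q : ℂ) u (c, d) (a, b) =
      if (a : ℕ) + (b : ℕ) = (c : ℕ) + (d : ℕ) then
        u ^ ((d : ℤ) - (b : ℤ)) * (q : ℂ) ^ (((d : ℤ) - (a : ℤ)) * (I : ℤ)) *
          ∑ p ∈ Finset.range (min (b : ℕ) (c : ℕ) + 1),
            Phi ((q : ℂ))⁻¹ ((c : ℕ) - p) ((c : ℕ) + (d : ℕ) - p) u ((q : ℂ) ^ (I : ℕ) * u) *
              Phi ((q : ℂ))⁻¹ p (b : ℕ) ((q : ℂ) ^ (I : ℕ) / u) ((q : ℂ) ^ (I : ℕ))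
      else 0 := by
  have hq : (q : ℂ) ≠ 0 := by exact_mod_cast hq0.ne'
  have hqn : ∀ n : ℕ, n ≠ 0 → (q : ℂ) ^ n ≠ 1 := by
    intro n hn h
    have h1 : q ^ n = 1 := by exact_mod_cast h
    exact absurd h1 (pow_lt_one₀ hq0.le hq1 hn).ne
  have hreg' : ∀ n : ℤ, -(I : ℤ) ≤ n → n ≤ I → 1 - (q : ℂ) ^ n * u ≠ 0 := by
    intro n h1 h2 h3
    apply hreg n h1 h2
    rw [mul_comm]; exact (sub_eq_zero.1 h3).symm
  have hb := b.isLt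
  have hd := d.isLt
  rw [RI_eq hq hqn I u hu hreg' a b c d]
  split_ifs with h
  · exact final_algebra hq hqn I u hu a b c d (by omega) (by omega) h
  · rfl
end

section
/- (Fused first Ghoshal–Zamolodchikov relation.) Let I ≥ 1 be an integer, 0 < q < 1, and 𝔞, 𝔠 ∈ ℝ. Let u ∈ ℂ \ {0} be such that 𝔠·(u q^{(I+1)/2−a})² + u q^{(I+1)/2−a} − 𝔞 ≠ 0 for each 1 ≤ a ≤ I and u²·q^m ≠ 1 for every integer m with −I ≤ m ≤ I. Then for all integers 0 ≤ d ≤ I and all h ∈ H: W(M^I_d(u)·h) = Σ_{a=0}^{I} K^I(u)_a^d · W(M^I_a(u⁻¹)·h). -/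
open scoped Matrix ComplexOrder

section helpers

open Matrix

variable {A : Type*} [Ring A] [Algebra ℂ A]

theorem aux_emb2_mulVec {n : ℕ} (i j : Fin n) (hij : i ≠ j)
    (T : Matrix (Fin 2 × Fin 2) (Fin 2 × Fin 2) ℂ) (f : (Fin n → Fin 2) → ℂ)
    (x : Fin n → Fin 2) :
    (emb2 i j T *ᵥ f) x = ∑ p : Fin 2 × Fin 2, T (x i, x j) p *
      f (Function.update (Function.update x i p.1) j p.2) := by
  simp only [mulVec, dotProduct, emb2]
  symm
  refine Finset.sum_of_injOn
    (fun p : Fin 2 × Fin 2 => Function.update (Function.update x i p.1) j p.2) ?_ ?_ ?_ ?_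
  · intro p _ p' _ h
    have h1 := congrFun h i
    have h2 := congrFun h j
    simp [Function.update_of_ne hij] at h1 h2
    exact Prod.ext h1 h2
  · intro p _; simp
  · intro y _ hy
    have : ¬ ∀ k, k ≠ i → k ≠ j → x k = y k := by
      intro hk
      apply hy
      refine ⟨(y i, y j), by simp, ?_⟩
      funext k
      by_cases h1 : k = j
      · subst h1; simp
      · by_cases h2 : k = i
        · subst h2; simp [h1]
        · simp [h1, h2, hk k h2 h1]
    simp [this]
  · intro p _
    have : ∀ k, k ≠ i → k ≠ j →
        x k = Function.update (Function.update x i p.1) j p.2 k := by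
      intro k h1 h2; simp [h1, h2]
    rw [if_pos this]
    simp [Function.update_of_ne hij]

theorem aux_emb1_mulVec {n : ℕ} (i : Fin n)
    (T : Matrix (Fin 2) (Fin 2) ℂ) (f : (Fin n → Fin 2) → ℂ)
    (x : Fin n → Fin 2) :
    (emb1 i T *ᵥ f) x = ∑ p : Fin 2, T (x i) p * f (Function.update x i p) := by
  simp only [mulVec, dotProduct, emb1]
  symm
  refine Finset.sum_of_injOn (fun p : Fin 2 => Function.update x i p) ?_ ?_ ?_ ?_
  · intro p _ p' _ h
    have h1 := congrFun h i
    simpa using h1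
  · intro p _; simp
  · intro y _ hy
    have : ¬ ∀ k, k ≠ i → x k = y k := by
      intro hk
      apply hy
      refine ⟨y i, by simp, ?_⟩
      funext k
      by_cases h2 : k = i
      · subst h2; simp
      · simp [h2, hk k h2]
    simp [this]
  · intro p _
    have : ∀ k, k ≠ i → x k = Function.update x i p k := by
      intro k h1; simp [h1]
    rw [if_pos this]
    simp

/-- ordered product of `M`-operators along a list of (site, spectral parameter) -/
noncomputable def auxProd (dd ee : A) {n : ℕ} (L : List (Fin n × ℂ)) (x : Fin n → Fin 2) : A :=
  (L.map (fun p => Mop dd ee (x p.1) p.2)).prod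

theorem auxProd_append (dd ee : A) {n : ℕ} (L L' : List (Fin n × ℂ)) (x : Fin n → Fin 2) :
    auxProd dd ee (L ++ L') x = auxProd dd ee L x * auxProd dd ee L' x := by
  simp [auxProd]

theorem auxProd_cons (dd ee : A) {n : ℕ} (p : Fin n × ℂ) (L' : List (Fin n × ℂ))
    (x : Fin n → Fin 2) :
    auxProd dd ee (p :: L') x = Mop dd ee (x p.1) p.2 * auxProd dd ee L' x := by
  simp [auxProd]

theorem auxProd_congr (dd ee : A) {n : ℕ} (L : List (Fin n × ℂ)) (x y : Fin n → Fin 2)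
    (h : ∀ p ∈ L, x p.1 = y p.1) : auxProd dd ee L x = auxProd dd ee L y := by
  unfold auxProd
  congr 1
  exact List.map_congr_left (fun p hp => by rw [h p hp])

/-- Zamolodchikov–Faddeev relation -/
theorem aux_ZF (q : ℂ) (dd ee : A)
    (hde : dd * ee - q • (ee * dd) = (1 - q) • (1 : A)) (v w : ℂ) (hv : v ≠ 0) (hw : w ≠ 0)
    (h1 : 1 - q * (v / w) ≠ 0) (c d : Fin 2) :
    ∑ p : Fin 2 × Fin 2, Rmat q (v / w) (c, d) p • (Mop dd ee p.1 v * Mop dd ee p.2 w) =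
      Mop dd ee d w * Mop dd ee c v := by
  have hde' : dd * ee = q • (ee * dd) + (1 - q) • (1 : A) := by rw [← hde]; abel
  rw [Fintype.sum_prod_type]
  have h2 : w - q * v ≠ 0 := by
    intro h; apply h1; field_simp; simpa using h
  fin_cases c <;> fin_cases d <;>
    simp [Fin.sum_univ_two, Rmat, Rent, Mop, add_mul, mul_add, hde', Algebra.algebraMap_eq_smul_one]
  · module
  · match_scalars <;> field_simp <;> ring
  · match_scalars <;> field_simp <;> ring
  · module

theorem aux_R_step (q : ℂ) (dd ee : A)
    (hde : dd * ee - q • (ee * dd) = (1 - q) • (1 : A)) (φ : A →ₗ[ℂ] ℂ)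
    {n : ℕ} (i j : Fin n) (hij : i ≠ j) (v w t : ℂ) (hv : v ≠ 0) (hw : w ≠ 0) (ht : t = v / w)
    (h1 : 1 - q * t ≠ 0) (L₁ L₂ : List (Fin n × ℂ))
    (h₁ : ∀ p ∈ L₁, p.1 ≠ i ∧ p.1 ≠ j) (h₂ : ∀ p ∈ L₂, p.1 ≠ i ∧ p.1 ≠ j) :
    emb2 i j (Rmat q t) *ᵥ (fun x => φ (auxProd dd ee (L₁ ++ (i, v) :: (j, w) :: L₂) x)) =
      fun x => φ (auxProd dd ee (L₁ ++ (j, w) :: (i, v) :: L₂) x) := by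
  subst ht
  funext x
  rw [aux_emb2_mulVec i j hij]
  have key : ∀ p : Fin 2 × Fin 2, auxProd dd ee (L₁ ++ (i, v) :: (j, w) :: L₂)
      (Function.update (Function.update x i p.1) j p.2) =
      auxProd dd ee L₁ x * ((Mop dd ee p.1 v * Mop dd ee p.2 w) * auxProd dd ee L₂ x) := by
    intro p
    rw [auxProd_append, auxProd_cons, auxProd_cons,
      auxProd_congr dd ee L₁ _ x (fun p hp => by simp [(h₁ p hp).1, (h₁ p hp).2]),
      auxProd_congr dd ee L₂ _ x (fun p hp => by simp [(h₂ p hp).1, (h₂ p hp).2])]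
    simp [Function.update_of_ne hij, mul_assoc]
  simp only [key]
  rw [auxProd_append, auxProd_cons, auxProd_cons]
  simp only
  rw [← mul_assoc (Mop dd ee (x j) w), ← aux_ZF q dd ee hde v w hv hw h1, Finset.sum_mul,
    Finset.mul_sum, map_sum]
  refine Finset.sum_congr rfl (fun p _ => ?_)
  rw [smul_mul_assoc, mul_smul_comm, map_smul, smul_eq_mul]

theorem aux_K_step (dd ee : A) (fa fc : ℂ) (φ : A →ₗ[ℂ] ℂ)
    (hφ : ∀ m : A, φ ((fa • ee - fc • dd + 1) * m) = 0)
    {n : ℕ} (i : Fin n) (v : ℂ) (hv : v ≠ 0)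
    (h1 : fc * v ^ 2 + v - fa ≠ 0) (L₂ : List (Fin n × ℂ))
    (h₂ : ∀ p ∈ L₂, p.1 ≠ i) :
    emb1 i (Kmat fa fc v) *ᵥ (fun x => φ (auxProd dd ee ((i, v⁻¹) :: L₂) x)) =
      fun x => φ (auxProd dd ee ((i, v) :: L₂) x) := by
  funext x
  rw [aux_emb1_mulVec]
  have key : ∀ p : Fin 2, auxProd dd ee ((i, v⁻¹) :: L₂) (Function.update x i p) =
      Mop dd ee p v⁻¹ * auxProd dd ee L₂ x := by
    intro p
    rw [auxProd_cons, auxProd_congr dd ee L₂ _ x (fun p hp => by simp [(h₂ p hp)])]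
    simp
  simp only [key]
  rw [auxProd_cons]
  simp only
  generalize auxProd dd ee L₂ x = m
  have h0 := hφ m
  simp only [add_mul, sub_mul, smul_mul_assoc, one_mul, map_add, map_sub, map_smul,
    smul_eq_mul] at h0
  generalize x i = b
  fin_cases b <;>
    simp [Fin.sum_univ_two, Kmat, Kent, Mop, add_mul, Algebra.algebraMap_eq_smul_one]
  · generalize φ m = M at *
    generalize φ (ee * m) = E at *
    generalize φ (dd * m) = D at *
    generalize hden : fc * v ^ 2 + v - fa = den at *
    field_simp
    subst hden
    first
      | linear_combination (-(v ^ 2 - 1)) * h0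
      | linear_combination v * (-(v ^ 2 - 1)) * h0
  · generalize φ m = M at *
    generalize φ (ee * m) = E at *
    generalize φ (dd * m) = D at *
    generalize hden : fc * v ^ 2 + v - fa = den at *
    field_simp
    subst hden
    first
      | linear_combination ((v ^ 2 - 1)) * h0
      | linear_combination v * ((v ^ 2 - 1)) * h0

/-- moving one factor through a list -/
theorem aux_R_list (q : ℂ) (dd ee : A)
    (hde : dd * ee - q • (ee * dd) = (1 - q) • (1 : A)) (φ : A →ₗ[ℂ] ℂ)
    {n : ℕ} (w : Fin n → ℂ) (hw : ∀ i, w i ≠ 0)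
    (hr : ∀ i j, i ≠ j → 1 - q * (w i * w j) ≠ 0) (a : Fin n) (L₂ : List (Fin n × ℂ))
    (h₂ : ∀ p ∈ L₂, p.1 ≠ a) :
    ∀ (l : List (Fin n)) (L₁ : List (Fin n × ℂ)), l.Nodup → a ∉ l →
      (∀ p ∈ L₁, p.1 ≠ a ∧ p.1 ∉ l) → (∀ p ∈ L₂, p.1 ∉ l) →
      (l.map (fun b => emb2 b a (Rmat q (w b * w a)))).prod *ᵥ
        (fun x => φ (auxProd dd ee (L₁ ++ (l.map (fun b => (b, w b)) ++ (a, (w a)⁻¹) :: L₂)) x))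
      = fun x => φ (auxProd dd ee (L₁ ++ (a, (w a)⁻¹) :: (l.map (fun b => (b, w b)) ++ L₂)) x) := by
  intro l
  induction l with
  | nil => intro L₁ _ _ _ _; simp
  | cons b l ih =>
    intro L₁ hnd hal hL₁ hL₂
    rw [List.nodup_cons] at hnd
    simp only [List.mem_cons, not_or] at hal hL₁ hL₂
    rw [List.map_cons, List.prod_cons, ← mulVec_mulVec]
    have e1 := ih (L₁ ++ [(b, w b)]) hnd.2 hal.2 (by
      intro p hp
      rw [List.mem_append] at hp
      rcases hp with hp | hp
      · exact ⟨(hL₁ p hp).1, (hL₁ p hp).2.2⟩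
      · simp at hp; subst hp
        exact ⟨Ne.symm hal.1, hnd.1⟩) (fun p hp => (hL₂ p hp).2)
    simp only [List.append_assoc, List.cons_append, List.nil_append, List.map_cons] at e1 ⊢
    rw [e1]
    refine aux_R_step q dd ee hde φ b a (Ne.symm hal.1) (w b) (w a)⁻¹ _ (hw b)
      (inv_ne_zero (hw a)) (by simp) (hr b a (Ne.symm hal.1)) L₁ _ ?_ ?_
    · intro p hp; exact ⟨(hL₁ p hp).2.1, (hL₁ p hp).1⟩
    · intro p hp
      rw [List.mem_append] at hp
      rcases hp with hp | hp
      · simp at hp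
        obtain ⟨c, hc, rfl⟩ := hp
        exact ⟨fun h => hnd.1 (h ▸ hc), fun h => hal.2 (h ▸ hc)⟩
      · exact ⟨(hL₂ p hp).1, h₂ p hp⟩

/-- descending list of sites `k-1, …, 0` -/
def auxD {I : ℕ} (k : ℕ) (hk : k ≤ I) : List (Fin I) :=
  (List.finRange k).map (fun b' => ⟨k - 1 - b'.1, by have := b'.isLt; omega⟩)

theorem auxD_mem {I : ℕ} (k : ℕ) (hk : k ≤ I) (i : Fin I) (h : i ∈ auxD k hk) : i.1 < k := by
  simp only [auxD, List.mem_map] at h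
  obtain ⟨b, _, rfl⟩ := h
  have := b.isLt
  simp only
  omega

theorem auxD_nodup {I : ℕ} (k : ℕ) (hk : k ≤ I) : (auxD k hk).Nodup := by
  unfold auxD
  refine List.Nodup.map ?_ (List.nodup_finRange k)
  intro b c h
  have := b.isLt
  have := c.isLt
  simp only [Fin.mk.injEq] at h
  ext
  omega

theorem auxD_succ {I : ℕ} (k : ℕ) (hk : k + 1 ≤ I) :
    auxD (k + 1) hk = ⟨k, hk⟩ :: auxD k (Nat.le_of_succ_le hk) := by
  unfold auxD
  rw [List.finRange_succ, List.map_cons, List.map_map]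
  simp only [List.cons.injEq]
  refine ⟨by simp, List.map_congr_left (fun b _ => ?_)⟩
  simp only [Function.comp, Fin.val_succ, Fin.mk.injEq]
  omega

theorem aux_drop_mem {I : ℕ} (k : ℕ) (i : Fin I) (h : i ∈ (List.finRange I).drop k) :
    k ≤ i.1 := by
  rw [List.mem_drop_iff_getElem] at h
  obtain ⟨j, hj, rfl⟩ := h
  simp

theorem aux_drop {I : ℕ} (k : ℕ) (hk : k + 1 ≤ I) :
    (List.finRange I).drop k = ⟨k, hk⟩ :: (List.finRange I).drop (k + 1) := by
  rw [List.drop_eq_getElem_cons (by simpa using hk)]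
  simp

theorem aux_stages (q : ℂ) (dd ee : A) (fa fc : ℂ)
    (hde : dd * ee - q • (ee * dd) = (1 - q) • (1 : A)) (φ : A →ₗ[ℂ] ℂ)
    (hφ : ∀ m : A, φ ((fa • ee - fc • dd + 1) * m) = 0)
    {I : ℕ} (w : Fin I → ℂ) (hw : ∀ i, w i ≠ 0)
    (hr : ∀ i j, i ≠ j → 1 - q * (w i * w j) ≠ 0)
    (hk1 : ∀ i, fc * (w i) ^ 2 + w i - fa ≠ 0) :
    ∀ (k : ℕ) (hk : k ≤ I),
      ((auxD k hk).map (fun a => emb1 a (Kmat fa fc (w a)) *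
        ((auxD a.1 a.isLt.le).map (fun b => emb2 b a (Rmat q (w b * w a)))).prod)).prod *ᵥ
        (fun x => φ (auxProd dd ee ((List.finRange I).map (fun b => (b, (w b)⁻¹))) x)) =
      fun x => φ (auxProd dd ee ((auxD k hk).map (fun b => (b, w b)) ++
        ((List.finRange I).drop k).map (fun b => (b, (w b)⁻¹))) x) := by
  intro k
  induction k with
  | zero => intro hk; simp [auxD]
  | succ k ih =>
    intro hk
    rw [auxD_succ k hk, List.map_cons, List.prod_cons, ← mulVec_mulVec,
      ih (Nat.le_of_succ_le hk), aux_drop k hk, ← mulVec_mulVec]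
    have e1 := aux_R_list q dd ee hde φ w hw hr ⟨k, hk⟩
      (((List.finRange I).drop (k + 1)).map (fun b => (b, (w b)⁻¹))) (by
        intro p hp
        rw [List.mem_map] at hp
        obtain ⟨b, hb, rfl⟩ := hp
        have := aux_drop_mem _ _ hb
        intro h
        simp only at h
        subst h
        simp at this) (auxD k (Nat.le_of_succ_le hk)) [] (auxD_nodup _ _)
        (fun h => by simpa using auxD_mem _ _ _ h) (by simp) (by
        intro p hp hp'
        rw [List.mem_map] at hp
        obtain ⟨b, hb, rfl⟩ := hp
        have h1 := aux_drop_mem _ _ hb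
        have h2 := auxD_mem _ _ _ hp'
        simp only at h2
        omega)
    simp only [List.nil_append, List.map_cons] at e1 ⊢
    rw [e1]
    refine aux_K_step dd ee fa fc φ hφ _ _ (hw _) (hk1 _) _ ?_
    intro p hp h
    rw [List.mem_append, List.mem_map, List.mem_map] at hp
    rcases hp with ⟨b, hb, rfl⟩ | ⟨b, hb, rfl⟩
    · have := auxD_mem _ _ _ hb
      simp only at h
      subst h
      simp at this
    · have := aux_drop_mem _ _ hb
      simp only at h
      subst h
      simp at this

/-- sorted product -/
noncomputable def auxS (dd ee : A) (q : ℂ) : ℕ → ℕ → ℂ → A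
  | 0, 0, _ => 1
  | 0, m + 1, v => Mop dd ee 1 v * auxS dd ee q 0 m (q * v)
  | n + 1, m, v => Mop dd ee 0 v * auxS dd ee q n m (q * v)

theorem aux_swap (dd ee : A) (q : ℂ) (hq : q ≠ 0)
    (hde : dd * ee - q • (ee * dd) = (1 - q) • (1 : A)) (v : ℂ) (hv : v ≠ 0) :
    Mop dd ee 1 v * Mop dd ee 0 (q * v) = q • (Mop dd ee 0 v * Mop dd ee 1 (q * v)) := by
  have hde' : dd * ee = q • (ee * dd) + (1 - q) • (1 : A) := by rw [← hde]; abel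
  simp [Mop, add_mul, mul_add, hde', Algebra.algebraMap_eq_smul_one]
  match_scalars <;> field_simp <;> ring

theorem auxS_swap (dd ee : A) (q : ℂ) (hq : q ≠ 0)
    (hde : dd * ee - q • (ee * dd) = (1 - q) • (1 : A)) (n m : ℕ) :
    ∀ v : ℂ, v ≠ 0 → Mop dd ee 1 v * auxS dd ee q n m (q * v) =
      q ^ n • auxS dd ee q n (m + 1) v := by
  induction n with
  | zero => intro v hv; simp [auxS]
  | succ n ih =>
    intro v hv
    simp only [auxS]
    rw [← mul_assoc, aux_swap dd ee q hq hde v hv, smul_mul_assoc, mul_assoc,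
      ih (q * v) (mul_ne_zero hq hv), mul_smul_comm, smul_smul, pow_succ']

theorem aux_inv_succ {n : ℕ} (x : Fin (n + 1) → Fin 2) :
    invCount x = invCount (fun i : Fin n => x i.succ) +
      if x 0 = 1 then n - ∑ j : Fin n, (x j.succ : ℕ) else 0 := by
  unfold invCount
  rw [Finset.card_filter, Finset.card_filter, Fintype.sum_prod_type, Fintype.sum_prod_type,
    Fin.sum_univ_succ, add_comm]
  congr 1
  · refine Finset.sum_congr rfl (fun i _ => ?_)
    rw [Fin.sum_univ_succ]
    simp
  · rw [Fin.sum_univ_succ]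
    simp only [lt_self_iff_false, false_and, if_false, zero_add, Fin.succ_pos, true_and]
    rcases (by omega : x 0 = 0 ∨ x 0 = 1) with h | h
    · simp [h]
    · simp only [h, if_true]
      have : ∀ j : Fin n, (if x j.succ < 1 then 1 else 0) + (x j.succ : ℕ) = 1 := by
        intro j
        generalize x j.succ = b
        fin_cases b <;> simp
      have h2 : ∑ j : Fin n, ((if x j.succ < 1 then 1 else 0) + (x j.succ : ℕ)) = n := by
        rw [Finset.sum_congr rfl (fun j _ => this j)]; simp
      rw [Finset.sum_add_distrib] at h2
      omega

theorem aux_weight_le {n : ℕ} (x : Fin n → Fin 2) : ∑ j, (x j : ℕ) ≤ n := by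
  have : ∑ j : Fin n, (x j : ℕ) ≤ ∑ _j : Fin n, 1 :=
    Finset.sum_le_sum (fun j _ => by have := (x j).isLt; omega)
  simpa using this

theorem aux_exch (dd ee : A) (q : ℂ) (hq : q ≠ 0)
    (hde : dd * ee - q • (ee * dd) = (1 - q) • (1 : A)) (n : ℕ) :
    ∀ (v : ℂ), v ≠ 0 → ∀ (x : Fin n → Fin 2),
      ((List.finRange n).map (fun a => Mop dd ee (x a) (v * q ^ a.1))).prod =
      q ^ invCount x • auxS dd ee q (n - ∑ j, (x j : ℕ)) (∑ j, (x j : ℕ)) v := by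
  induction n with
  | zero => intro v hv x; simp [auxS, invCount]
  | succ n ih =>
    intro v hv x
    rw [List.finRange_succ, List.map_cons, List.prod_cons, List.map_map]
    have e := ih (q * v) (mul_ne_zero hq hv) (fun i => x i.succ)
    have hf : ((fun a : Fin (n + 1) => Mop dd ee (x a) (v * q ^ a.1)) ∘ Fin.succ) =
        fun a : Fin n => Mop dd ee (x a.succ) (q * v * q ^ a.1) := by
      funext a
      simp only [Function.comp, Fin.val_succ]
      congr 1
      ring
    rw [hf, e, aux_inv_succ x, Fin.sum_univ_succ (fun j => (x j : ℕ))]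
    have hle := aux_weight_le (fun i : Fin n => x i.succ)
    generalize (∑ j : Fin n, (x j.succ : ℕ)) = m at *
    rcases (by omega : x 0 = 0 ∨ x 0 = 1) with h | h
    · have h3 : n + 1 - m = (n - m) + 1 := by omega
      simp [h, h3, auxS]
    · have h3 : n + 1 - (1 + m) = n - m := by omega
      simp only [h, Fin.val_zero, pow_zero, mul_one, Fin.val_one, h3, if_true]
      rw [mul_smul_comm, auxS_swap dd ee q hq hde _ _ v hv, smul_smul, pow_add, add_comm 1 m]

theorem aux_Zq_ne (I : ℕ) (q : ℝ) (hq : 0 < q) (x : Fin I → Fin 2) :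
    Zq I (q : ℂ) (∑ j, (x j : ℕ)) ≠ 0 := by
  unfold Zq
  have : (∑ z ∈ Finset.univ.filter
      (fun z : Fin I → Fin 2 => (∑ j, ((z j : ℕ))) = ∑ j, (x j : ℕ)), (q : ℂ) ^ invCount z) =
      ((∑ z ∈ Finset.univ.filter
      (fun z : Fin I → Fin 2 => (∑ j, ((z j : ℕ))) = ∑ j, (x j : ℕ)), q ^ invCount z : ℝ) : ℂ) := by
    push_cast; rfl
  rw [this]
  norm_cast
  exact ne_of_gt (Finset.sum_pos (fun z _ => pow_pos hq _) ⟨x, by simp⟩)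

/-- `Π̂` reconstructs a `q`-exchangeable vector. -/
theorem aux_hatPi (I : ℕ) (q : ℝ) (hq : 0 < q) (f : (Fin I → Fin 2) → ℂ) (S : ℕ → ℂ)
    (hf : ∀ x, f x = (q : ℂ) ^ invCount x * S (∑ j, (x j : ℕ))) :
    hatPiMat I (q : ℂ) *ᵥ (fun a : Fin (I + 1) =>
      ∑ z ∈ Finset.univ.filter (fun z : Fin I → Fin 2 => (∑ j, ((z j : ℕ))) = (a : ℕ)), f z) =
      f := by
  funext x
  simp only [mulVec, dotProduct, hatPiMat]
  have hx := aux_weight_le x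
  rw [Finset.sum_eq_single (⟨∑ j, (x j : ℕ), by omega⟩ : Fin (I + 1))]
  · simp only [if_true]
    have h1 : ∑ z ∈ Finset.univ.filter
        (fun z : Fin I → Fin 2 => (∑ j, ((z j : ℕ))) = ∑ j, (x j : ℕ)), f z =
        Zq I (q : ℂ) (∑ j, (x j : ℕ)) * S (∑ j, (x j : ℕ)) := by
      rw [Zq, Finset.sum_mul]
      refine Finset.sum_congr rfl (fun z hz => ?_)
      rw [hf z, (Finset.mem_filter.mp hz).2]
    rw [h1, hf x]
    have := aux_Zq_ne I q hq x
    field_simp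
  · intro b _ hb
    rw [if_neg, zero_mul]
    intro h
    exact hb (Fin.ext h.symm)
  · simp

theorem aux_Kring (I : ℕ) (q : ℝ) (hq : 0 < q) (fa fc u : ℂ) (w : Fin I → ℂ)
    (hw : ∀ i, w i = u * qrpow q (((I : ℝ) + 1) / 2 - ((i.1 : ℝ) + 1))) :
    Kring I q fa fc u = permMat I Fin.revPerm *
      ((auxD I le_rfl).map (fun a => emb1 a (Kmat fa fc (w a)) *
        ((auxD a.1 a.isLt.le).map
          (fun b => emb2 b a (Rmat (q : ℂ) (w b * w a)))).prod)).prod := by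
  unfold Kring
  congr 2
  conv_rhs => unfold auxD
  rw [List.map_map]
  refine List.map_congr_left (fun a' _ => ?_)
  have ha := a'.isLt
  simp only [Function.comp]
  congr 1
  · congr 2
    rw [hw]
    congr 2
    simp only
    rw [Nat.cast_sub (by omega), Nat.cast_sub (by omega)]
    push_cast
    ring
  · congr 1
    rw [List.map_map]
    refine List.map_congr_left (fun b' _ => ?_)
    have hb := b'.isLt
    simp only [Function.comp]
    have e1 : (⟨I - a'.1 - 2 - b'.1, by omega⟩ : Fin I) = ⟨I - 1 - a'.1 - 1 - b'.1, by omega⟩ := by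
      ext; simp only; omega
    rw [e1]
    congr 2
    rw [hw, hw]
    simp only [qrpow]
    rw [mul_mul_mul_comm, ← pow_two, ← Complex.ofReal_mul, ← Real.rpow_add hq,
      ← Complex.ofReal_zpow, ← Real.rpow_intCast]
    congr 3
    rw [Nat.cast_sub (by omega), Nat.cast_sub (by omega), Nat.cast_sub (by omega),
      Nat.cast_sub (by omega)]
    push_cast
    ring

end helpers

/-- **Fused first Ghoshal–Zamolodchikov relation**: if `𝐝𝐞 − q𝐞𝐝 = (1−q)·1` and the
ℂ-linear functional `W` kills `(𝔞𝐞 − 𝔠𝐝 + 1)·h` for all `h`, then for `u ≠ 0` avoiding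
the singular points, `W(M^I_d(u)·h) = Σ_{a=0}^{I} K^I(u)_a^d W(M^I_a(u⁻¹)·h)`. -/
theorem fused_GZ_first {A : Type*} [Ring A] [Algebra ℂ A]
    {H : Type*} [AddCommGroup H] [Module ℂ H] [Module A H]
    [IsScalarTower ℂ A H] [SMulCommClass ℂ A H]
    (I : ℕ) (hI : 1 ≤ I) (q : ℝ) (hq0 : 0 < q) (hq1 : q < 1)
    (fa fc : ℝ) (dd ee : A)
    (hde : dd * ee - (q : ℂ) • (ee * dd) = (1 - (q : ℂ)) • (1 : A))
    (W : H →ₗ[ℂ] ℂ)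
    (hW : ∀ h : H, W (((fa : ℂ) • ee - (fc : ℂ) • dd + 1) • h) = 0)
    (u : ℂ) (hu : u ≠ 0)
    (hden : ∀ a : ℕ, 1 ≤ a → a ≤ I →
      (fc : ℂ) * (u * qrpow q (((I : ℝ) + 1) / 2 - (a : ℝ))) ^ 2 +
        u * qrpow q (((I : ℝ) + 1) / 2 - (a : ℝ)) - (fa : ℂ) ≠ 0)
    (hreg : ∀ m : ℤ, -(I : ℤ) ≤ m → m ≤ (I : ℤ) → u ^ 2 * (q : ℂ) ^ m ≠ 1)
    (d : Fin (I + 1)) (h : H) :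
    W (MIop dd ee I q (d : ℕ) u • h) =
      ∑ a : Fin (I + 1),
        KI I q (fa : ℂ) (fc : ℂ) u d a * W (MIop dd ee I q (a : ℕ) u⁻¹ • h) := by
  have hqc : (q : ℂ) ≠ 0 := by exact_mod_cast hq0.ne'
  have hqr : ∀ r, qrpow q r ≠ 0 := fun r => by
    unfold qrpow
    exact_mod_cast (Real.rpow_pos_of_pos hq0 r).ne'
  have hqinv : ∀ r, (qrpow q r)⁻¹ = qrpow q (-r) := fun r => by
    unfold qrpow
    rw [Real.rpow_neg hq0.le, Complex.ofReal_inv]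
  have hqadd : ∀ r s, qrpow q r * qrpow q s = qrpow q (r + s) := fun r s => by
    unfold qrpow
    rw [Real.rpow_add hq0, Complex.ofReal_mul]
  let w : Fin I → ℂ := fun i => u * qrpow q (((I : ℝ) + 1) / 2 - ((i.1 : ℝ) + 1))
  let φ : A →ₗ[ℂ] ℂ :=
    { toFun := fun m => W (m • h)
      map_add' := fun m m' => by rw [add_smul, map_add]
      map_smul' := fun c m => by rw [smul_assoc, map_smul]; rfl }
  have hφd : ∀ m, φ m = W (m • h) := fun m => rfl
  have hφ : ∀ m : A, φ (((fa : ℂ) • ee - (fc : ℂ) • dd + 1) * m) = 0 := by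
    intro m
    rw [hφd, mul_smul]
    exact hW _
  have hw0 : ∀ i, w i ≠ 0 := fun i => mul_ne_zero hu (hqr _)
  have hr : ∀ i j, i ≠ j → 1 - (q : ℂ) * (w i * w j) ≠ 0 := by
    intro i j hij hz
    have hi := i.isLt
    have hj := j.isLt
    have hne : i.1 ≠ j.1 := fun h => hij (Fin.ext h)
    apply hreg ((I : ℤ) - i.1 - j.1) (by omega) (by omega)
    have : (q : ℂ) * (w i * w j) = u ^ 2 * (q : ℂ) ^ ((I : ℤ) - i.1 - j.1) := by
      simp only [w]
      rw [mul_mul_mul_comm, hqadd]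
      unfold qrpow
      rw [← Complex.ofReal_zpow, ← Real.rpow_intCast, ← pow_two, mul_left_comm,
        ← Complex.ofReal_mul]
      congr 2
      nth_rewrite 1 [← Real.rpow_one q]
      rw [← Real.rpow_add hq0]
      congr 1
      push_cast
      ring
    rw [← this]
    exact (sub_eq_zero.mp hz).symm
  have hk1 : ∀ i, (fc : ℂ) * (w i) ^ 2 + w i - fa ≠ 0 := by
    intro i
    have := hden (i.1 + 1) (by omega) i.isLt
    push_cast at this
    exact this
  have hst := aux_stages (q : ℂ) dd ee (fa : ℂ) (fc : ℂ) hde φ hφ w hw0 hr hk1 I le_rfl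
  set f0 : (Fin I → Fin 2) → ℂ :=
    fun x => φ (auxProd dd ee ((List.finRange I).map (fun b => (b, (w b)⁻¹))) x) with hf0
  have hprod : ∀ x : Fin I → Fin 2,
      auxProd dd ee ((List.finRange I).map (fun b => (b, (w b)⁻¹))) x =
      ((List.finRange I).map (fun a =>
      Mop dd ee (x a) (u⁻¹ * qrpow q (((a.1 : ℝ) + 1) - ((I : ℝ) + 1) / 2)))).prod := by
    intro x
    unfold auxProd
    rw [List.map_map]
    congr 1
    refine List.map_congr_left (fun a _ => ?_)
    simp only [Function.comp, w]
    rw [mul_inv, hqinv, neg_sub]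
  have hM : ∀ a : Fin (I + 1), W (MIop dd ee I q (a : ℕ) u⁻¹ • h) =
      ∑ z ∈ Finset.univ.filter (fun z : Fin I → Fin 2 => (∑ j, ((z j : ℕ))) = (a : ℕ)), f0 z := by
    intro a
    rw [← hφd, MIop, map_sum]
    refine Finset.sum_congr rfl (fun z _ => ?_)
    rw [hf0]
    simp only
    rw [hprod]
  have hexch := aux_exch dd ee (q : ℂ) hqc hde I (u⁻¹ * qrpow q (1 - ((I : ℝ) + 1) / 2))
    (mul_ne_zero (inv_ne_zero hu) (hqr _))
  have hhat := aux_hatPi I q hq0 f0 (fun m => φ (auxS dd ee (q : ℂ) (I - m) m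
    (u⁻¹ * qrpow q (1 - ((I : ℝ) + 1) / 2)))) (by
      intro x
      rw [hf0]
      simp only
      rw [← smul_eq_mul, ← map_smul, ← hexch x, hprod]
      congr 3
      funext a
      congr 1
      rw [mul_assoc]
      congr 1
      unfold qrpow
      rw [← Complex.ofReal_pow, ← Real.rpow_natCast, ← Complex.ofReal_mul, ← Real.rpow_add hq0]
      congr 2
      ring)
  have hR : ∑ a : Fin (I + 1),
        KI I q (fa : ℂ) (fc : ℂ) u d a * W (MIop dd ee I q (a : ℕ) u⁻¹ • h) =
      (KI I q (fa : ℂ) (fc : ℂ) u *ᵥ (fun a : Fin (I + 1) =>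
        ∑ z ∈ Finset.univ.filter
          (fun z : Fin I → Fin 2 => (∑ j, ((z j : ℕ))) = (a : ℕ)), f0 z)) d := by
    simp only [Matrix.mulVec, dotProduct, hM]
  rw [hR, KI, ← Matrix.mulVec_mulVec, hhat, ← Matrix.mulVec_mulVec,
    aux_Kring I q hq0 fa fc u w (fun i => rfl), ← Matrix.mulVec_mulVec, hst]
  rw [← hφd, MIop, map_sum, Finset.sum_filter]
  simp only [Matrix.mulVec, dotProduct, PiMat, permMat]
  refine Finset.sum_congr rfl (fun z _ => ?_)
  simp only [ite_mul, one_mul, zero_mul, Finset.sum_ite_eq, Finset.mem_univ, if_true]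
  refine if_congr Iff.rfl ?_ rfl
  congr 1
  unfold auxProd auxD
  rw [List.drop_eq_nil_of_le (by simp)]
  simp only [List.map_nil, List.append_nil, List.map_map]
  congr 1
  refine List.map_congr_left (fun a _ => ?_)
  have ha := a.isLt
  simp only [Function.comp, w]
  congr 2
  · congr 1
    ext
    simp [Fin.val_rev]
    omega
  · congr 1
    rw [Nat.cast_sub (by omega), Nat.cast_sub (by omega)]
    push_cast
    ring
end
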